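/- arXiv:1710.10981 — 3 statements merged into one kernel-verified Lean document; each statement's English description precedes it below -/
import Mathlib

section
/- Assume dom G_t* ⊂ M_t for all t = 0,…,T, that û ≤ Kψ for some K ∈ ℝ, and that the superhedging problem remains feasible when û is increased by εψ for some ε > 0. Then the infimum of Σ_{t=0}^T G_t*(λ_t) − ∫_S û dλ over nonnegative martingale measures λ ∈ 𝓜 is attained, and its value equals the negative of the infimum of the superhedging problem: minimize Σ_{t=0}^T G_t(x_t) over x ∈ ∏_t C_t and z ∈ N subject to û(s) ≤ Σ_{t=0}^{T−1} z_t(s^t)·(s_{t+1} − s_t) + Σ_{t=0}^T x_t(s_t) for all s ∈ S. -/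
/-! Weak duality is integration of the superhedging inequality against a martingale measure
(`weak_duality`), so it suffices to produce a martingale measure `λ` whose dual value is at most
`-inf P`. If `inf P = -∞`, any martingale measure works. Otherwise `λ` is obtained as a
subgradient of the value function (`core`).

Consider the pairs `(u, r)` such that `û + ψ u` can be superhedged at cost at most `r`, with `u`
bounded and continuous. They form a convex set, and feasibility for `û + ε ψ` says that all `u` with
`‖u‖ < ε` are admissible at one common cost. Hahn–Banach separation (`hb_sep`) therefore yields a
continuous functional `θ` with `θ u + inf P ≤ r` on this set. It is positive, since lowering the
claim is free, and it vanishes on the gains of continuous strategies, since these form a linear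
space along which the claim can be moved at no cost. Its restriction to `C_t` has a finite conjugate
value under `G_t`, so by `dom G_t* ⊆ M_t` it is represented by a measure. As mass far out in
path space is dominated by mass far out in the marginals (`chi_path_le`), `θ` is tight, and the
Riesz representation theorem gives a measure on path space (`riesz_tight`, `riesz_weight`).
The martingale property extends from continuous to bounded measurable adapted integrands because
finite measures are determined by their integrals of bounded continuous functions
(`ext_bdd`, `martingale_of_bcf`). Finally, `û / ψ` is a pointwise limit from above of bounded
continuous functions (`usc_approx`), each of which is a legitimate perturbation, and Fatou's lemma
(`fatou_usc`) turns the subgradient inequality into the bound on the dual value. -/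

open MeasureTheory Filter Set
open scoped ENNReal

noncomputable section

/-- The positive part of an extended real number, as an extended nonnegative real. -/
def EReal.posPart' (x : EReal) : ℝ≥0∞ := if x = ⊤ then ⊤ else ENNReal.ofReal x.toReal

/-- Integral of an `EReal`-valued function, with the convention that the value is `⊤`
whenever the positive part fails to be integrable. -/
def eInt {X : Type*} [MeasurableSpace X] (μ : Measure X) (f : X → EReal) : EReal :=
  if (∫⁻ s, (f s).posPart' ∂μ) = ⊤ then ⊤
  else ((∫⁻ s, (f s).posPart' ∂μ : ℝ≥0∞) : EReal) -
    ((∫⁻ s, (-(f s)).posPart' ∂μ : ℝ≥0∞) : EReal)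

/-- Integral of a real function against a finite signed measure, via the Jordan
decomposition. -/
def sInt {X : Type*} [MeasurableSpace X] (m : SignedMeasure X) (f : X → ℝ) : ℝ :=
  ∫ s, f s ∂m.toJordanDecomposition.posPart - ∫ s, f s ∂m.toJordanDecomposition.negPart

/-- Convexity of an extended-real-valued function on a real vector space. -/
def EConvexOn {E : Type*} [AddCommGroup E] [Module ℝ E] (k : E → EReal) : Prop :=
  ∀ x y : E, ∀ a b : ℝ, 0 ≤ a → 0 ≤ b → a + b = 1 →
    k (a • x + b • y) ≤ (a : EReal) * k x + (b : EReal) * k y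

/-- Properness of an extended-real-valued function: it is nowhere `−∞` and somewhere
finite. -/
def EProper {E : Type*} (k : E → EReal) : Prop := (∃ x, k x ≠ ⊤) ∧ ∀ x, k x ≠ ⊥

/-- The recession function `k^∞` of a (convex lsc) function `k`:
`k^∞(x) = sup_{α>0} (k(x̄ + αx) − k(x̄))/α`, the supremum being taken also over all
points `x̄` of the domain of `k` (for convex lsc `k` it does not depend on `x̄`). -/
def erec {E : Type*} [AddCommGroup E] [Module ℝ E] (k : E → EReal) (x : E) : EReal :=
  ⨆ (y : E) (_ : k y < ⊤) (a : ℝ) (_ : 0 < a),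
    (((a⁻¹ : ℝ)) : EReal) * (k (y + a • x) - k y)

/-- The l.s.c. hull of the domain membership:  here simply the closure of the domain. -/
def edom {E : Type*} [TopologicalSpace E] (k : E → EReal) : Set E := closure {x | k x < ⊤}

/-- `v` belongs to the subdifferential `∂k(x)` (w.r.t. the euclidean pairing). -/
def ESubdiffAt {ι : Type*} [Fintype ι] (k : (ι → ℝ) → EReal) (x v : ι → ℝ) : Prop :=
  ∀ y : ι → ℝ, k x + ((∑ i, v i * (y i - x i) : ℝ) : EReal) ≤ k y

/-- `v` belongs to the normal cone `N_D(x)` of `D` at `x`. -/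
def InNormalCone {ι : Type*} [Fintype ι] (D : Set (ι → ℝ)) (x v : ι → ℝ) : Prop :=
  x ∈ D ∧ ∀ y ∈ D, (∑ i, v i * (y i - x i)) ≤ 0

/-- A property of points of `S = ∏ t, S t` holds `(μ_t)`-almost everywhere if it holds on
a Cartesian product of sets of full measure. -/
def ProdAE {T : ℕ} {S : Fin (T + 1) → Type*} [∀ t, MeasurableSpace (S t)]
    (μt : ∀ t, Measure (S t)) (P : (∀ t, S t) → Prop) : Prop :=
  ∃ A : ∀ t, Set (S t), (∀ t, MeasurableSet (A t) ∧ μt t (A t) = 1) ∧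
    ∀ s ∈ Set.univ.pi A, P s

/-- A set-valued mapping `D : S ⇉ ℝ^d` is inner semicontinuous if the preimage of every
open set is open. -/
def InnerSemicontinuous {X E : Type*} [TopologicalSpace X] [TopologicalSpace E]
    (D : X → Set E) : Prop :=
  ∀ O : Set E, IsOpen O → IsOpen {x | (D x ∩ O).Nonempty}

end
noncomputable section

open MeasureTheory Filter Set BoundedContinuousFunction
open scoped ENNReal Classical

/-- A (bounded, adapted) trading strategy `z ∈ N`: each `z_t` is a bounded measurable
`ℝ^n`-valued function on `S = S^0 × ⋯ × S^T` depending only on `(s_0,…,s_t)`. -/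
def IsStrategy {T n : ℕ} (z : Fin T → (Fin (T + 1) → Fin n → ℝ) → (Fin n → ℝ)) : Prop :=
  ∀ t, Measurable (z t) ∧ (∃ K : ℝ, ∀ s, ‖z t s‖ ≤ K) ∧
    ∀ s s' : Fin (T + 1) → Fin n → ℝ,
      (∀ r : Fin (T + 1), (r : ℕ) ≤ (t : ℕ) → s r = s' r) → z t s = z t s'

/-- The gain `∑_{t=0}^{T−1} z_t(s^t)·(s_{t+1} − s_t)` of a trading strategy. -/
def gains {T n : ℕ} (z : Fin T → (Fin (T + 1) → Fin n → ℝ) → (Fin n → ℝ))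
    (s : Fin (T + 1) → Fin n → ℝ) : ℝ :=
  ∑ t : Fin T, ∑ i, z t s i * (s t.succ i - s t.castSucc i)

/-- The weight `ψ(s) = ∑_t (1 + |s_t|)` on the path space. -/
def psiM {T n : ℕ} (s : Fin (T + 1) → Fin n → ℝ) : ℝ := ∑ t, (1 + ‖s t‖)

open scoped Topology CompactlySupported

/-! ### Separation, semicontinuous approximation and representation of functionals -/

/-- Subdifferentiability of a convex value function with value at least `φ` at `0`: `A` plays the
role of its epigraph, and boundedness of the value function by `r₀` on the ball of radius `ε`
makes the supporting hyperplane at `(0, φ)` non-vertical. -/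
lemma hb_sep {E : Type*} [NormedAddCommGroup E] [NormedSpace ℝ E] (A : Set (E × ℝ))
    (hA : Convex ℝ A) (φ : ℝ) (hφ : ∀ r, (0, r) ∈ A → φ ≤ r)
    (ε r₀ : ℝ) (hε : 0 < ε) (hball : ∀ u, ‖u‖ < ε → ∀ r, r₀ ≤ r → (u, r) ∈ A) :
    ∃ θ : E →L[ℝ] ℝ, ∀ u r, (u, r) ∈ A → θ u + φ ≤ r := by
  have hint : ((0 : E), r₀ + 1) ∈ interior A := by
    rw [mem_interior_iff_mem_nhds]
    have h1 : Metric.ball (0 : E) ε ×ˢ Ioi r₀ ∈ 𝓝 ((0 : E), r₀ + 1) :=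
      prod_mem_nhds (Metric.ball_mem_nhds _ hε) (Ioi_mem_nhds (by linarith))
    refine mem_of_superset h1 ?_
    rintro ⟨u, r⟩ ⟨hu, hr⟩
    exact hball u (by simpa using hu) r (le_of_lt hr)
  have hnot : ((0 : E), φ) ∉ interior A := by
    intro h
    have hc : Continuous (fun t : ℝ => ((0 : E), φ - t)) := by fun_prop
    have h2 : ∀ᶠ t : ℝ in 𝓝 0, ((0 : E), φ - t) ∈ A := by
      apply hc.continuousAt.eventually
      simpa using (mem_interior_iff_mem_nhds.1 h)
    obtain ⟨δ, hδ, h3⟩ := Metric.eventually_nhds_iff.1 h2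
    have := hφ _ (h3 (y := δ / 2) (by simp [abs_of_pos hδ]; linarith))
    linarith
  obtain ⟨f, hf⟩ := geometric_hahn_banach_open_point hA.interior isOpen_interior hnot
  have hle : ∀ p ∈ A, f p ≤ f (0, φ) := by
    intro p hp
    have h1 : p ∈ closure (interior A) := by
      rw [hA.closure_interior_eq_closure_of_nonempty_interior ⟨_, hint⟩]
      exact subset_closure hp
    exact closure_minimal (fun a ha => (hf a ha).le)
      (isClosed_le f.continuous continuous_const) h1
  set c := f (0, 1) with hc
  have hdec : ∀ u r, f (u, r) = f (u, 0) + r * c := by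
    intro u r
    rw [hc, ← smul_eq_mul, ← map_smul, ← map_add]
    simp
  have h00 : f ((0 : E), (0 : ℝ)) = 0 := by
    rw [← Prod.zero_eq_mk]; exact map_zero f
  have hc0 : c < 0 := by
    have h1 := hf _ hint
    rw [hdec, hdec 0 φ, h00] at h1
    have h2 := hφ (r₀) (hball 0 (by simpa using hε) r₀ le_rfl)
    nlinarith
  refine ⟨(-c)⁻¹ • (f.comp (ContinuousLinearMap.inl ℝ E ℝ)), fun u r hur => ?_⟩
  have h1 := hle _ hur
  rw [hdec, hdec 0 φ, h00] at h1
  have : f (u, 0) ≤ (-c) * (r - φ) := by linarith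
  have h2 : (-c)⁻¹ * f (u, 0) ≤ r - φ := by
    rw [inv_mul_le_iff₀ (by linarith)]; exact this
  simp only [_root_.smul_apply, ContinuousLinearMap.comp_apply,
    ContinuousLinearMap.inl_apply, smul_eq_mul]
  linarith

/-- An usc function bounded above is the pointwise limit, from above, of bounded Lipschitz
functions: the sup-convolutions `F k x = sup_y (max (f y) (-k) - k * dist x y)`. Truncating at
`-k` keeps `F k` bounded below. -/
lemma usc_approx {X : Type*} [PseudoMetricSpace X] (f : X → ℝ)
    (hf : UpperSemicontinuous f) (C : ℝ) (hC : ∀ x, f x ≤ C) :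
    ∃ F : ℕ → X →ᵇ ℝ, (∀ k x, f x ≤ F k x) ∧ (∀ k x, F k x ≤ |C|) ∧
      ∀ x, Tendsto (fun k => F k x) atTop (𝓝 (f x)) := by
  set g : ℕ → X → X → ℝ := fun k x y => max (f y) (-k) - k * dist x y with hg
  set F : ℕ → X → ℝ := fun k x => ⨆ y, g k x y with hF
  have hgC : ∀ k x y, g k x y ≤ |C| := by
    intro k x y
    have h1 : max (f y) (-(k : ℝ)) ≤ |C| := max_le ((hC y).trans (le_abs_self _))
      (by have := abs_nonneg C; have : (0 : ℝ) ≤ k := by positivity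
          linarith)
    have : 0 ≤ (k : ℝ) * dist x y := by positivity
    simp only [hg]; linarith
  have hbdd : ∀ k x, BddAbove (range (g k x)) := fun k x => ⟨|C|, by
    rintro _ ⟨y, rfl⟩; exact hgC k x y⟩
  have hlow : ∀ (k : ℕ) x, max (f x) (-(k : ℝ)) ≤ F k x := by
    intro k x
    have := le_ciSup (hbdd k x) x
    simpa [hg] using this
  have hup : ∀ k x, F k x ≤ |C| := by
    intro k x
    have : Nonempty X := ⟨x⟩
    exact ciSup_le (hgC k x)
  have hlip : ∀ k : ℕ, LipschitzWith k (F k) := by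
    intro k
    apply LipschitzWith.of_le_add_mul
    intro x y
    have : Nonempty X := ⟨x⟩
    apply ciSup_le
    intro w
    have h1 := le_ciSup (hbdd k y) w
    have h2 : dist y w ≤ dist x y + dist x w := by
      rw [dist_comm x y]; exact dist_triangle y x w
    have h3 : (k : ℝ) * dist y w ≤ k * (dist x y + dist x w) := by gcongr
    simp only [hg, hF] at h1 ⊢
    simp only [NNReal.coe_natCast]
    linarith
  refine ⟨fun k => ofNormedAddCommGroup (F k) (hlip k).continuous (max |C| k) ?_, ?_, ?_, ?_⟩
  · intro x
    rw [Real.norm_eq_abs, abs_le]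
    refine ⟨?_, (hup k x).trans (le_max_left _ _)⟩
    have h1 := (le_max_right _ _).trans (hlow k x)
    have h2 := le_max_right |C| (k : ℝ)
    linarith
  · intro k x
    exact (le_max_left _ _).trans (hlow k x)
  · intro k x
    exact hup k x
  · intro x
    change Tendsto (fun k => F k x) atTop (𝓝 (f x))
    rw [tendsto_order]
    refine ⟨fun a ha => Eventually.of_forall fun k =>
      ha.trans_le ((le_max_left _ _).trans (hlow k x)), fun a ha => ?_⟩
    obtain ⟨b, hb1, hb2⟩ := exists_between ha
    obtain ⟨δ, hδ, hball⟩ := Metric.eventually_nhds_iff.1 (hf x b hb1)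
    obtain ⟨N, hN⟩ := exists_nat_ge (max (-b) ((|C| - b) / δ))
    filter_upwards [eventually_ge_atTop N] with k hk
    have hk' : (N : ℝ) ≤ k := by exact_mod_cast hk
    have : Nonempty X := ⟨x⟩
    refine lt_of_le_of_lt (ciSup_le fun y => ?_) hb2
    simp only [hg]
    have h1 := (le_max_left _ _).trans (hN.trans hk')
    have h2 := (le_max_right _ _).trans (hN.trans hk')
    by_cases hy : dist y x < δ
    · have := hball hy
      have h3 : max (f y) (-(k : ℝ)) ≤ b := max_le this.le (by linarith)
      have : 0 ≤ (k : ℝ) * dist x y := by positivity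
      linarith
    · push Not at hy
      rw [dist_comm] at hy
      rw [div_le_iff₀ hδ] at h2
      have h3 : (k : ℝ) * δ ≤ k * dist x y := by gcongr
      have h1 : max (f y) (-(k : ℝ)) ≤ |C| := max_le ((hC y).trans (le_abs_self _))
        (by have := abs_nonneg C; have : (0 : ℝ) ≤ k := by positivity
            linarith)
      linarith

/-- A compactly supported continuous function, viewed as a bounded continuous function. -/
def ccB {X : Type*} [TopologicalSpace X] (f : C_c(X, ℝ)) : X →ᵇ ℝ :=
  ⟨f.toContinuousMap, map_bounded f⟩

/-- A positive functional on bounded continuous functions which is tight, in the sense that it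
tends to `0` along `1 - η k` for compactly supported cutoffs `η k`, is integration against a finite
measure. The measure is the Riesz–Markov–Kakutani measure of the restriction to `C_c`. -/
lemma riesz_tight {X : Type*} [TopologicalSpace X] [LocallyCompactSpace X] [T2Space X]
    [MeasurableSpace X] [BorelSpace X] (θ : (X →ᵇ ℝ) →L[ℝ] ℝ)
    (hpos : ∀ u : X →ᵇ ℝ, (∀ x, 0 ≤ u x) → 0 ≤ θ u)
    (η : ℕ → C_c(X, ℝ)) (h0 : ∀ k x, 0 ≤ η k x) (h1 : ∀ k x, η k x ≤ 1)
    (hlim : ∀ x, Tendsto (fun k => η k x) atTop (𝓝 1))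
    (htight : Tendsto (fun k => θ (1 - ccB (η k))) atTop (𝓝 0)) :
    ∃ μ : Measure X, IsFiniteMeasure μ ∧ ∀ w : X →ᵇ ℝ, ∫ x, w x ∂μ = θ w := by
  let Λ : C_c(X, ℝ) →ₚ[ℝ] ℝ := PositiveLinearMap.mk₀
    { toFun := fun f => θ (ccB f)
      map_add' := fun f g => by rw [← map_add]; rfl
      map_smul' := fun a f => by rw [← map_smul]; rfl } (fun f hf => hpos _ (fun x => hf x))
  set μ := RealRMK.rieszMeasure Λ with hμ
  have hint : ∀ f : C_c(X, ℝ), ∫ x, f x ∂μ = θ (ccB f) := RealRMK.integral_rieszMeasure Λ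
  have hmono : ∀ u v : X →ᵇ ℝ, (∀ x, u x ≤ v x) → θ u ≤ θ v := by
    intro u v h
    have := hpos (v - u) (fun x => by simpa using h x)
    rw [map_sub] at this; linarith
  have hintg : ∀ f : C_c(X, ℝ), Integrable f μ := fun f =>
    f.continuous.integrable_of_hasCompactSupport f.hasCompactSupport
  have hfin : IsFiniteMeasure μ := by
    constructor
    have h2 : ∫⁻ x, (1 : ℝ≥0∞) ∂μ ≤ ENNReal.ofReal (θ 1) := by
      calc ∫⁻ x, (1 : ℝ≥0∞) ∂μ
          = ∫⁻ x, liminf (fun k => ENNReal.ofReal (η k x)) atTop ∂μ := by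
            apply lintegral_congr
            intro x
            have := (ENNReal.continuous_ofReal.tendsto _).comp (hlim x)
            rw [ENNReal.ofReal_one] at this
            exact this.liminf_eq.symm
        _ ≤ liminf (fun k => ∫⁻ x, ENNReal.ofReal (η k x) ∂μ) atTop :=
            lintegral_liminf_le (fun k => by
              have := (η k).continuous.measurable
              fun_prop)
        _ ≤ ENNReal.ofReal (θ 1) := by
            apply liminf_le_of_le
            · isBoundedDefault
            intro b hb
            obtain ⟨k, hk⟩ := hb.exists
            refine hk.trans ?_
            rw [← ofReal_integral_eq_lintegral_ofReal (hintg _)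
              (Eventually.of_forall (h0 k)), hint]
            exact ENNReal.ofReal_le_ofReal (hmono _ _ (h1 k))
    rw [lintegral_one] at h2
    exact h2.trans_lt ENNReal.ofReal_lt_top
  refine ⟨μ, hfin, fun w => ?_⟩
  -- `∫ w * η k` has the limit `∫ w` by dominated convergence and the limit `θ w` by tightness.
  have hL1 : Tendsto (fun k => ∫ x, w x * η k x ∂μ) atTop (𝓝 (∫ x, w x ∂μ)) := by
    apply tendsto_integral_of_dominated_convergence (fun _ => ‖w‖)
    · intro k
      exact ((w.continuous.mul (η k).continuous).integrable_of_hasCompactSupport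
        ((η k).hasCompactSupport.mul_left)).aestronglyMeasurable
    · exact integrable_const _
    · intro k
      refine Eventually.of_forall fun x => ?_
      rw [norm_mul]
      have h3 : ‖η k x‖ ≤ 1 := by
        rw [Real.norm_of_nonneg (h0 k x)]; exact h1 k x
      calc ‖w x‖ * ‖η k x‖ ≤ ‖w‖ * 1 := by
            gcongr
            exact w.norm_coe_le_norm x
        _ = ‖w‖ := mul_one _
    · refine Eventually.of_forall fun x => ?_
      simpa using (hlim x).const_mul (w x)
  have hL2 : Tendsto (fun k => ∫ x, w x * η k x ∂μ) atTop (𝓝 (θ w)) := by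
    have heq : ∀ k, ∫ x, w x * η k x ∂μ = θ (w * ccB (η k)) := by
      intro k
      let p : C_c(X, ℝ) := ⟨w.toContinuousMap * (η k).toContinuousMap,
        (η k).hasCompactSupport.mul_left⟩
      exact hint p
    have hb : ∀ k, |θ w - θ (w * ccB (η k))| ≤ ‖w‖ * θ (1 - ccB (η k)) := by
      intro k
      rw [← map_sub, abs_le, ← smul_eq_mul, ← map_smul, ← map_neg]
      constructor <;>
      · apply hmono
        intro x
        have e1 : 0 ≤ 1 - η k x := by linarith [h1 k x]
        have e2 := abs_le.1 (w.norm_coe_le_norm x)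
        simp only [BoundedContinuousFunction.coe_neg, BoundedContinuousFunction.coe_sub,
          BoundedContinuousFunction.coe_mul, BoundedContinuousFunction.coe_smul,
          BoundedContinuousFunction.coe_one, Pi.neg_apply, Pi.sub_apply, Pi.mul_apply, Pi.one_apply,
          smul_eq_mul]
        have e3 : (ccB (η k)) x = η k x := rfl
        rw [e3]
        nlinarith
    simp_rw [heq]
    have h5 : Tendsto (fun k => ‖w‖ * θ (1 - ccB (η k))) atTop (𝓝 0) := by
      simpa using htight.const_mul ‖w‖
    rw [tendsto_iff_norm_sub_tendsto_zero]
    refine squeeze_zero (fun _ => norm_nonneg _) (fun k => ?_) h5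
    rw [norm_sub_rev]
    exact hb k
  exact tendsto_nhds_unique hL1 hL2

/-- Dividing a finite measure by the weight `ψ` passes from bounded continuous representatives
`w` to the functions `ψ * w` of the weighted space. -/
lemma riesz_weight {X : Type*} [TopologicalSpace X] [MeasurableSpace X] [BorelSpace X]
    (ν : Measure X) [IsFiniteMeasure ν] (ψ : X → ℝ) (hψ : Continuous ψ) (h1 : ∀ x, 1 ≤ ψ x) :
    ∃ μ : Measure X, Integrable ψ μ ∧ ∀ w : X → ℝ, ∫ x, ψ x * w x ∂μ = ∫ x, w x ∂ν := by
  have hm : Measurable fun x => ((ψ x)⁻¹).toNNReal := by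
    have := hψ.measurable
    fun_prop
  have hc : ∀ x a, ((ψ x)⁻¹).toNNReal • (ψ x * a) = a := by
    intro x a
    have := h1 x
    rw [NNReal.smul_def, Real.coe_toNNReal _ (by positivity), smul_eq_mul]
    field_simp
  refine ⟨ν.withDensity fun x => (((ψ x)⁻¹).toNNReal : ℝ≥0∞), ?_, fun w => ?_⟩
  · rw [integrable_withDensity_iff_integrable_smul hm]
    have : (fun x => ((ψ x)⁻¹).toNNReal • ψ x) = fun _ => (1 : ℝ) := by
      ext x; simpa using hc x 1
    rw [this]; exact integrable_const _
  · rw [integral_withDensity_eq_integral_smul hm]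
    simp_rw [hc]

/-- If `D` is orthogonal to all bounded continuous functions of `p`, then it is orthogonal to all
bounded measurable functions of `p`: the images under `p` of the finite measures with densities
`D⁺` and `D⁻` have the same integrals of bounded continuous functions, hence coincide. -/
lemma ext_bdd {X Y : Type*} [MeasurableSpace X] [TopologicalSpace Y] [HasOuterApproxClosed Y]
    [MeasurableSpace Y] [BorelSpace Y] (μ : Measure X) (D : X → ℝ) (hD : Measurable D)
    (hDi : Integrable D μ) (p : X → Y) (hp : Measurable p)
    (h : ∀ w : Y →ᵇ ℝ, ∫ x, w (p x) * D x ∂μ = 0)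
    (f : Y → ℝ) (hf : Measurable f) (C : ℝ) (hC : ∀ y, |f y| ≤ C) :
    ∫ x, f (p x) * D x ∂μ = 0 := by
  have hm1 : Measurable fun x => (D x).toNNReal := by fun_prop
  have hm2 : Measurable fun x => (-D x).toNNReal := by fun_prop
  have fin1 : IsFiniteMeasure (μ.withDensity fun x => ((D x).toNNReal : ℝ≥0∞)) :=
    isFiniteMeasure_withDensity_ofReal hDi.2
  have fin2 : IsFiniteMeasure (μ.withDensity fun x => ((-D x).toNNReal : ℝ≥0∞)) :=
    isFiniteMeasure_withDensity_ofReal hDi.neg.2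
  have key : ∀ g : Y → ℝ, Measurable g → (∃ C, ∀ y, |g y| ≤ C) →
      ∫ y, g y ∂((μ.withDensity fun x => ((D x).toNNReal : ℝ≥0∞)).map p) -
      ∫ y, g y ∂((μ.withDensity fun x => ((-D x).toNNReal : ℝ≥0∞)).map p) =
      ∫ x, g (p x) * D x ∂μ := by
    rintro g hg ⟨C, hC⟩
    rw [integral_map hp.aemeasurable hg.aestronglyMeasurable,
      integral_map hp.aemeasurable hg.aestronglyMeasurable,
      integral_withDensity_eq_integral_smul hm1, integral_withDensity_eq_integral_smul hm2,
      ← integral_sub]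
    · congr 1
      ext x
      simp only [NNReal.smul_def, smul_eq_mul, Real.coe_toNNReal']
      rw [← sub_mul, mul_comm]
      congr 1
      rcases le_total 0 (D x) with hx | hx
      · rw [max_eq_left hx, max_eq_right (by linarith)]; ring
      · rw [max_eq_right hx, max_eq_left (by linarith)]; ring
    · simp only [NNReal.smul_def, smul_eq_mul]
      exact hDi.real_toNNReal.mul_bdd (c := C) (hg.comp hp).aestronglyMeasurable
        (Eventually.of_forall fun x => hC _)
    · simp only [NNReal.smul_def, smul_eq_mul]
      exact hDi.neg.real_toNNReal.mul_bdd (c := C) (hg.comp hp).aestronglyMeasurable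
        (Eventually.of_forall fun x => hC _)
  have heq : (μ.withDensity fun x => ((D x).toNNReal : ℝ≥0∞)).map p =
      (μ.withDensity fun x => ((-D x).toNNReal : ℝ≥0∞)).map p := by
    apply ext_of_forall_integral_eq_of_IsFiniteMeasure
    intro w
    have := key w w.continuous.measurable ⟨‖w‖, w.norm_coe_le_norm⟩
    rw [h w] at this
    linarith
  rw [← key f hf ⟨C, hC⟩, heq, sub_self]

/-! ### The weighted space on paths and trading strategies -/

/-- The path space `S = S_0 × ⋯ × S_T`. -/
abbrev Pth (T n : ℕ) := Fin (T + 1) → Fin n → ℝ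

section
variable {T n : ℕ}

lemma psiM_continuous : Continuous (psiM : Pth T n → ℝ) := by
  unfold psiM; fun_prop

lemma weight_le_psiM (s : Pth T n) (t : Fin (T + 1)) : 1 + ‖s t‖ ≤ psiM s := by
  unfold psiM
  exact Finset.single_le_sum (f := fun t => 1 + ‖s t‖) (fun i _ => by positivity)
    (Finset.mem_univ t)

lemma one_le_psiM (s : Pth T n) : 1 ≤ psiM s :=
  le_trans (by have := norm_nonneg (s 0); linarith) (weight_le_psiM s 0)

lemma psiM_pos (s : Pth T n) : 0 < psiM s := lt_of_lt_of_le one_pos (one_le_psiM s)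

/-- A continuous function `f` with `|f| ≤ C * ψ` as an element of the weighted space on paths, which
is encoded by the bounded continuous functions `f / ψ`. -/
def divPsi (f : Pth T n → ℝ) (hf : Continuous f) (C : ℝ) (hC : ∀ s, |f s| ≤ C * psiM s) :
    Pth T n →ᵇ ℝ :=
  ofNormedAddCommGroup (fun s => f s / psiM s)
    (hf.div psiM_continuous fun s => (psiM_pos s).ne') C (fun s => by
      rw [Real.norm_eq_abs, abs_div, abs_of_pos (psiM_pos s), div_le_iff₀ (psiM_pos s)]
      exact hC s)

lemma norm_divPsi_le (f : Pth T n → ℝ) (hf : Continuous f) (C : ℝ)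
    (hC : ∀ s, |f s| ≤ C * psiM s) (h0 : 0 ≤ C) : ‖divPsi f hf C hC‖ ≤ C :=
  norm_ofNormedAddCommGroup_le _ h0 _

lemma psiM_mul_divPsi (f : Pth T n → ℝ) (hf : Continuous f) (C : ℝ)
    (hC : ∀ s, |f s| ≤ C * psiM s) (s : Pth T n) : psiM s * divPsi f hf C hC s = f s := by
  have := (psiM_pos s).ne'
  change psiM s * (f s / psiM s) = f s
  field_simp

lemma weighted_le (t : Fin (T + 1)) (x : (Fin n → ℝ) →ᵇ ℝ) (s : Pth T n) :
    |(1 + ‖s t‖) * x (s t)| ≤ ‖x‖ * psiM s := by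
  rw [abs_mul, abs_of_pos (by positivity), mul_comm]
  have := x.norm_coe_le_norm (s t)
  have := weight_le_psiM s t
  gcongr
  assumption

/-- The embedding `C_t → C`, `x ↦ (s ↦ x (s_t))`, in terms of the bounded representatives `x / ψ_t`
and `x / ψ`. It is a contraction because `ψ_t ≤ ψ`. -/
def embC (t : Fin (T + 1)) : ((Fin n → ℝ) →ᵇ ℝ) →L[ℝ] (Pth T n →ᵇ ℝ) :=
  LinearMap.mkContinuous
    { toFun := fun x => divPsi (fun s => (1 + ‖s t‖) * x (s t)) (by fun_prop) ‖x‖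
        (weighted_le t x)
      map_add' := fun x y => by
        ext s
        change (1 + ‖s t‖) * (x (s t) + y (s t)) / psiM s =
          (1 + ‖s t‖) * x (s t) / psiM s + (1 + ‖s t‖) * y (s t) / psiM s
        ring
      map_smul' := fun a x => by
        ext s
        change (1 + ‖s t‖) * (a * x (s t)) / psiM s = a * ((1 + ‖s t‖) * x (s t) / psiM s)
        ring } 1 (fun x => by
        rw [one_mul]
        exact norm_divPsi_le _ (by fun_prop) _ (weighted_le t x) (norm_nonneg _))

lemma psiM_mul_embC (t : Fin (T + 1)) (x : (Fin n → ℝ) →ᵇ ℝ) (s : Pth T n) :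
    psiM s * embC t x s = (1 + ‖s t‖) * x (s t) := by
  have := (psiM_pos s).ne'
  change psiM s * ((1 + ‖s t‖) * x (s t) / psiM s) = _
  field_simp

lemma gains_add_smul (z z' : Fin T → Pth T n → (Fin n → ℝ)) (a b : ℝ) (s : Pth T n) :
    gains (fun t s => a • z t s + b • z' t s) s = a * gains z s + b * gains z' s := by
  unfold gains
  simp only [Finset.mul_sum, ← Finset.sum_add_distrib, Pi.add_apply, Pi.smul_apply, smul_eq_mul]
  refine Finset.sum_congr rfl fun t _ => Finset.sum_congr rfl fun i _ => ?_
  ring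

lemma IsStrategy.add_smul {z z' : Fin T → Pth T n → (Fin n → ℝ)} (hz : IsStrategy z)
    (hz' : IsStrategy z') (a b : ℝ) : IsStrategy (fun t s => a • z t s + b • z' t s) := by
  intro t
  obtain ⟨h1, ⟨K, hK⟩, h2⟩ := hz t
  obtain ⟨h1', ⟨K', hK'⟩, h2'⟩ := hz' t
  refine ⟨by fun_prop, ⟨|a| * K + |b| * K', fun s => ?_⟩, fun s s' h => ?_⟩
  · refine (norm_add_le _ _).trans ?_
    rw [norm_smul, norm_smul, Real.norm_eq_abs, Real.norm_eq_abs]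
    have := hK s; have := hK' s
    gcongr
  · simp only [h2 s s' h, h2' s s' h]

lemma isStrategy_zero : IsStrategy (fun (_ : Fin T) (_ : Pth T n) => (0 : Fin n → ℝ)) :=
  fun _ => ⟨measurable_const, ⟨0, by simp⟩, fun _ _ _ => rfl⟩

lemma gains_zero (s : Pth T n) : gains (fun (_ : Fin T) (_ : Pth T n) => (0 : Fin n → ℝ)) s = 0 := by
  simp [gains]

/-- The path with all coordinates after time `t` set to zero. Functions of `cutP t s` are exactly
the functions of `(s_0, …, s_t)`. -/
def cutP (t : Fin T) (s : Pth T n) : Pth T n := fun r => if (r : ℕ) ≤ (t : ℕ) then s r else 0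

lemma cutP_continuous (t : Fin T) : Continuous (cutP (n := n) t) := by
  unfold cutP
  refine continuous_pi fun r => ?_
  split_ifs <;> fun_prop

lemma incr_le (t : Fin T) (i : Fin n) (s : Pth T n) :
    |s t.succ i - s t.castSucc i| ≤ 2 * psiM s := by
  have h1 := weight_le_psiM s t.succ
  have h2 := weight_le_psiM s t.castSucc
  have h3 := norm_le_pi_norm (s t.succ) i
  have h4 := norm_le_pi_norm (s t.castSucc) i
  rw [Real.norm_eq_abs] at h3 h4
  have := abs_sub (s t.succ i) (s t.castSucc i)
  linarith

lemma integrable_of_le_psi {μ : Measure (Pth T n)} (hμ : Integrable psiM μ) (f : Pth T n → ℝ)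
    (hf : Measurable f) (C : ℝ) (hC : ∀ s, |f s| ≤ C * psiM s) : Integrable f μ :=
  (hμ.const_mul C).mono' hf.aestronglyMeasurable (Eventually.of_forall hC)

/-- The strategy that holds `w (s_0, …, s_t)` units of asset `i` between times `t` and `t + 1`, and
nothing else. -/
def oneStrat (t : Fin T) (i : Fin n) (w : Pth T n →ᵇ ℝ) : Fin T → Pth T n → (Fin n → ℝ) :=
  fun t' s => if t' = t then Pi.single i (w (cutP t s)) else 0

lemma isStrategy_oneStrat (t : Fin T) (i : Fin n) (w : Pth T n →ᵇ ℝ) :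
    IsStrategy (oneStrat t i w) := by
  intro t'
  by_cases h : t' = t
  · subst h
    have e : oneStrat t' i w t' = fun s => Pi.single i (w (cutP t' s)) := by
      funext s; simp [oneStrat]
    rw [e]
    refine ⟨?_, ⟨‖w‖, fun s => ?_⟩, fun s s' hs => ?_⟩
    · exact (measurable_update (0 : Fin n → ℝ)).comp
        (w.continuous.comp (cutP_continuous t')).measurable
    · rw [Pi.norm_single]
      exact w.norm_coe_le_norm _
    · have : cutP t' s = cutP t' s' := by
        funext r
        unfold cutP
        split_ifs with hr
        · exact hs r hr
        · rfl
      simp only [this]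
  · have e : oneStrat t i w t' = fun _ => 0 := by
      funext s; simp [oneStrat, h]
    rw [e]
    exact ⟨measurable_const, ⟨0, by simp⟩, fun _ _ _ => rfl⟩

lemma gains_oneStrat (t : Fin T) (i : Fin n) (w : Pth T n →ᵇ ℝ) (s : Pth T n) :
    gains (oneStrat t i w) s = w (cutP t s) * (s t.succ i - s t.castSucc i) := by
  unfold gains oneStrat
  rw [Finset.sum_eq_single t]
  · rw [Finset.sum_eq_single i]
    · simp
    · intro j _ hj; simp [hj]
    · simp
  · intro t' _ ht; simp [ht]
  · simp

lemma gains_bound {z : Fin T → Pth T n → (Fin n → ℝ)} (hz : IsStrategy z) :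
    Measurable (gains z) ∧ ∃ C, ∀ s, |gains z s| ≤ C * psiM s := by
  choose h1 h2 h3 using hz
  choose K hK using h2
  constructor
  · unfold gains
    fun_prop
  · refine ⟨∑ t : Fin T, ∑ i : Fin n, K t * 2, fun s => ?_⟩
    unfold gains
    rw [Finset.sum_mul]
    refine (Finset.abs_sum_le_sum_abs _ _).trans (Finset.sum_le_sum fun t _ => ?_)
    rw [Finset.sum_mul]
    refine (Finset.abs_sum_le_sum_abs _ _).trans (Finset.sum_le_sum fun i _ => ?_)
    rw [abs_mul, mul_assoc]
    have e1 := (norm_le_pi_norm (z t s) i).trans (hK t s)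
    have e2 := incr_le t i s
    rw [Real.norm_eq_abs] at e1
    have := abs_nonneg (z t s i)
    exact mul_le_mul e1 e2 (abs_nonneg _) (this.trans e1)

/-- The martingale property need only be tested on one-asset, one-period strategies that depend
continuously on the past. -/
lemma martingale_of_bcf {μ : Measure (Pth T n)} (hμ : Integrable psiM μ)
    (h : ∀ (t : Fin T) (i : Fin n) (w : Pth T n →ᵇ ℝ),
      ∫ s, w (cutP t s) * (s t.succ i - s t.castSucc i) ∂μ = 0)
    (z : Fin T → Pth T n → (Fin n → ℝ)) (hz : IsStrategy z) : ∫ s, gains z s ∂μ = 0 := by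
  have hterm : ∀ (t : Fin T) (i : Fin n),
      Integrable (fun s => z t s i * (s t.succ i - s t.castSucc i)) μ ∧
      ∫ s, z t s i * (s t.succ i - s t.castSucc i) ∂μ = 0 := by
    intro t i
    obtain ⟨h1, ⟨K, hK⟩, h2⟩ := hz t
    have hKi : ∀ s, |z t s i| ≤ K := fun s => (norm_le_pi_norm (z t s) i).trans (hK s)
    have hD : Measurable fun s : Pth T n => s t.succ i - s t.castSucc i := by fun_prop
    have hDi : Integrable (fun s : Pth T n => s t.succ i - s t.castSucc i) μ :=
      integrable_of_le_psi hμ _ hD 2 (incr_le t i)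
    have hzi : Measurable fun s => z t s i := by fun_prop
    refine ⟨hDi.bdd_mul (c := K) hzi.aestronglyMeasurable (Eventually.of_forall hKi), ?_⟩
    have := ext_bdd μ _ hD hDi (cutP t) (cutP_continuous t).measurable (h t i)
      (fun s => z t s i) hzi K hKi
    rw [← this]
    congr 1
    ext s
    rw [h2 s (cutP t s) (fun r hr => by simp [cutP, hr])]
  unfold gains
  rw [integral_finsetSum _ fun t _ => integrable_finsetSum _ fun i _ => (hterm t i).1]
  refine Finset.sum_eq_zero fun t _ => ?_
  rw [integral_finsetSum _ fun i _ => (hterm t i).1]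
  exact Finset.sum_eq_zero fun i _ => (hterm t i).2

end

/-! ### Fatou's lemma, cutoffs and tightness -/

/-- Fatou's lemma for functions bounded above by `C * ψ`; the lower bound `a` also forces the limit
to be integrable. -/
lemma fatou_usc {X : Type*} [MeasurableSpace X] (μ : Measure X) (ψ f : X → ℝ) (F : ℕ → X → ℝ)
    (C a : ℝ) (hψ0 : ∀ x, 0 ≤ ψ x) (hψ : Integrable ψ μ) (hf : Measurable fun x => ψ x * f x)
    (hF : ∀ k, Integrable (fun x => ψ x * F k x) μ) (hFC : ∀ k x, F k x ≤ C)
    (hfC : ∀ x, f x ≤ C)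
    (hlim : ∀ x, Tendsto (fun k => F k x) atTop (𝓝 (f x))) (ha : ∀ k, a ≤ ∫ x, ψ x * F k x ∂μ) :
    Integrable (fun x => ψ x * f x) μ ∧ a ≤ ∫ x, ψ x * f x ∂μ := by
  have hhk : ∀ k, Integrable (fun x => C * ψ x - ψ x * F k x) μ :=
    fun k => (hψ.const_mul C).sub (hF k)
  have hh0 : ∀ k x, 0 ≤ C * ψ x - ψ x * F k x := fun k x => by
    have := hψ0 x; have := hFC k x; nlinarith
  have hf0 : ∀ x, 0 ≤ C * ψ x - ψ x * f x := fun x => by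
    have := hψ0 x; have := hfC x; nlinarith
  have hIk : ∀ k, ∫ x, (C * ψ x - ψ x * F k x) ∂μ ≤ C * ∫ x, ψ x ∂μ - a := by
    intro k
    rw [integral_sub (hψ.const_mul C) (hF k), integral_const_mul]
    linarith [ha k]
  have hfat : ∫⁻ x, ENNReal.ofReal (C * ψ x - ψ x * f x) ∂μ ≤
      ENNReal.ofReal (C * ∫ x, ψ x ∂μ - a) := by
    calc ∫⁻ x, ENNReal.ofReal (C * ψ x - ψ x * f x) ∂μ
        = ∫⁻ x, liminf (fun k => ENNReal.ofReal (C * ψ x - ψ x * F k x)) atTop ∂μ := by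
          apply lintegral_congr
          intro x
          have := (ENNReal.continuous_ofReal.tendsto _).comp
            ((((hlim x).const_mul (ψ x))).const_sub (C * ψ x))
          exact this.liminf_eq.symm
      _ ≤ liminf (fun k => ∫⁻ x, ENNReal.ofReal (C * ψ x - ψ x * F k x) ∂μ) atTop :=
          lintegral_liminf_le' (fun k => (hhk k).aemeasurable.ennreal_ofReal)
      _ ≤ _ := by
          apply liminf_le_of_le
          · isBoundedDefault
          intro b hb
          obtain ⟨k, hk⟩ := hb.exists
          refine hk.trans ?_
          rw [← ofReal_integral_eq_lintegral_ofReal (hhk k) (Eventually.of_forall (hh0 k))]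
          exact ENNReal.ofReal_le_ofReal (hIk k)
  have hmeas : AEStronglyMeasurable (fun x => C * ψ x - ψ x * f x) μ :=
    (hψ.const_mul C).aestronglyMeasurable.sub hf.aestronglyMeasurable
  have hint : Integrable (fun x => C * ψ x - ψ x * f x) μ := by
    refine ⟨hmeas, ?_⟩
    rw [hasFiniteIntegral_iff_ofReal (Eventually.of_forall hf0)]
    exact hfat.trans_lt ENNReal.ofReal_lt_top
  have hfi : Integrable (fun x => ψ x * f x) μ := by
    have := (hψ.const_mul C).sub hint
    refine this.congr (Eventually.of_forall fun x => ?_)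
    simp
  refine ⟨hfi, ?_⟩
  rw [← ofReal_integral_eq_lintegral_ofReal hint (Eventually.of_forall hf0),
    ENNReal.ofReal_le_ofReal_iff ((integral_nonneg (hh0 0)).trans (hIk 0)),
    integral_sub (hψ.const_mul C) hfi, integral_const_mul] at hfat
  linarith

/-- Continuous cutoff: `0` on the ball of radius `k`, `1` outside the ball of radius `k + 1`. -/
def chi (E : Type*) [NormedAddCommGroup E] (k : ℕ) : E →ᵇ ℝ :=
  ofNormedAddCommGroup (fun x => min 1 (max 0 (‖x‖ - k))) (by fun_prop) 1 (fun x => by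
    rw [Real.norm_of_nonneg (le_min zero_le_one (le_max_left _ _))]
    exact min_le_left _ _)

lemma chi_apply {E : Type*} [NormedAddCommGroup E] (k : ℕ) (x : E) :
    chi E k x = min 1 (max 0 (‖x‖ - k)) := rfl

lemma chi_nonneg {E : Type*} [NormedAddCommGroup E] (k : ℕ) (x : E) : 0 ≤ chi E k x :=
  le_min zero_le_one (le_max_left _ _)

lemma chi_le_one {E : Type*} [NormedAddCommGroup E] (k : ℕ) (x : E) : chi E k x ≤ 1 :=
  min_le_left _ _

lemma chi_tendsto {E : Type*} [NormedAddCommGroup E] (x : E) :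
    Tendsto (fun k => chi E k x) atTop (𝓝 0) := by
  obtain ⟨N, hN⟩ := exists_nat_ge ‖x‖
  refine tendsto_const_nhds.congr' ?_
  filter_upwards [eventually_ge_atTop N] with k hk
  have : (N : ℝ) ≤ k := by exact_mod_cast hk
  rw [chi_apply, max_eq_left (by linarith), min_eq_right zero_le_one]

/-- The compactly supported cutoff `1 - chi`. -/
def etaC (E : Type*) [NormedAddCommGroup E] [ProperSpace E] (k : ℕ) : C_c(E, ℝ) :=
  ⟨⟨fun x => 1 - chi E k x, by fun_prop⟩, by
    refine HasCompactSupport.intro (isCompact_closedBall (0 : E) (k + 1)) fun x hx => ?_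
    have : (k : ℝ) + 1 < ‖x‖ := by simpa using hx
    change 1 - chi E k x = 0
    rw [chi_apply, max_eq_right (by linarith), min_eq_left (by linarith), sub_self]⟩

lemma etaC_apply {E : Type*} [NormedAddCommGroup E] [ProperSpace E] (k : ℕ) (x : E) :
    etaC E k x = 1 - chi E k x := rfl

lemma one_sub_etaC (E : Type*) [NormedAddCommGroup E] [ProperSpace E] (k : ℕ) :
    1 - ccB (etaC E k) = chi E k := by
  ext x
  change 1 - (1 - chi E k x) = chi E k x
  ring

/-- Mass far out in path space is controlled by the mass far out in the marginals: at a path `s`,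
let `s_t` be the coordinate of largest norm; then `‖s‖ = ‖s_t‖` and
`ψ(s) ≤ (T + 1) * ψ_t(s_t)`. -/
lemma chi_path_le {T n : ℕ} (k : ℕ) (s : Pth T n) :
    chi (Pth T n) k s ≤ (T + 1 : ℝ) * ∑ t, embC t (chi (Fin n → ℝ) k) s := by
  obtain ⟨t, ht⟩ := Finite.exists_max fun t => ‖s t‖
  have hs : ‖s‖ ≤ ‖s t‖ := (pi_norm_le_iff_of_nonneg (norm_nonneg _)).2 ht
  have h1 : chi (Pth T n) k s ≤ chi (Fin n → ℝ) k (s t) := by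
    rw [chi_apply, chi_apply]
    gcongr
  have h2 : psiM s ≤ (T + 1 : ℝ) * (1 + ‖s t‖) := by
    unfold psiM
    calc ∑ r, (1 + ‖s r‖) ≤ ∑ _r : Fin (T + 1), (1 + ‖s t‖) :=
          Finset.sum_le_sum fun r _ => by have := ht r; linarith
      _ = _ := by simp; ring
  have h3 : psiM s * embC t (chi (Fin n → ℝ) k) s ≤
      psiM s * ∑ t, embC t (chi (Fin n → ℝ) k) s := by
    have := (psiM_pos s).le
    gcongr
    refine Finset.single_le_sum (f := fun t => embC t (chi (Fin n → ℝ) k) s)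
      (fun r _ => ?_) (Finset.mem_univ t)
    have h4 := psiM_mul_embC r (chi (Fin n → ℝ) k) s
    have h5 : 0 ≤ (1 + ‖s r‖) * chi (Fin n → ℝ) k (s r) :=
      mul_nonneg (by positivity) (chi_nonneg _ _)
    rw [← h4] at h5
    exact nonneg_of_mul_nonneg_right h5 (psiM_pos s)
  rw [psiM_mul_embC] at h3
  have h6 := chi_nonneg k (s t)
  have hT : (0 : ℝ) ≤ T + 1 := by positivity
  refine le_of_mul_le_mul_left ?_ (psiM_pos s)
  calc psiM s * chi (Pth T n) k s ≤ ((T + 1 : ℝ) * (1 + ‖s t‖)) * chi (Fin n → ℝ) k (s t) := by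
        have := chi_nonneg k s
        gcongr
    _ = (T + 1 : ℝ) * ((1 + ‖s t‖) * chi (Fin n → ℝ) k (s t)) := by ring
    _ ≤ (T + 1 : ℝ) * (psiM s * ∑ t, embC t (chi (Fin n → ℝ) k) s) := by gcongr
    _ = _ := by ring

lemma sInt_chi_tendsto {n : ℕ} (m : SignedMeasure (Fin n → ℝ))
    (hm : Integrable (fun st => 1 + ‖st‖) m.totalVariation) :
    Tendsto (fun k => sInt m fun st => (1 + ‖st‖) * chi (Fin n → ℝ) k st) atTop (𝓝 0) := by
  have key : ∀ μ : Measure (Fin n → ℝ), Integrable (fun st => 1 + ‖st‖) μ →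
      Tendsto (fun k => ∫ st, (1 + ‖st‖) * chi (Fin n → ℝ) k st ∂μ) atTop (𝓝 0) := by
    intro μ hμ
    rw [show (0 : ℝ) = ∫ _, (0 : ℝ) ∂μ by simp]
    refine tendsto_integral_of_dominated_convergence _ (fun k => ?_) hμ (fun k => ?_) ?_
    · exact Continuous.aestronglyMeasurable (by fun_prop)
    · refine Eventually.of_forall fun x => ?_
      have h1 := chi_nonneg k x
      have h2 := chi_le_one k x
      have : 0 ≤ 1 + ‖x‖ := by positivity
      rw [Real.norm_of_nonneg (by positivity)]
      nlinarith
    · refine Eventually.of_forall fun x => ?_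
      simpa using (chi_tendsto x).const_mul (1 + ‖x‖)
  have h := (key _ hm.left_of_add_measure).sub (key _ hm.right_of_add_measure)
  rw [sub_zero] at h
  exact h

/-! ### Construction of the dual solution -/

/-- The dual solution. Given a finite lower bound `φ` for the superhedging problem, there is a
martingale measure `λ` with `∑ₜ (∫ xₜ dλ - Gₜ(xₜ)) ≤ ∫ û dλ - φ` for all `x`. The pairs `(x, g)`
with `Gₜ(xₜ) ≤ gₜ` range over the epigraphs, which keeps the inequality real-valued. -/
lemma core {T n : ℕ} (uhat : Pth T n → ℝ) (husc : UpperSemicontinuous uhat)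
    (K : ℝ) (huK : ∀ s, uhat s ≤ K * psiM s)
    (G : Fin (T + 1) → ((Fin n → ℝ) →ᵇ ℝ) → EReal)
    (hGconv : ∀ t, EConvexOn (G t)) (hGproper : ∀ t, EProper (G t))
    (hdomG : ∀ t, ∀ θ : WeakDual ℝ ((Fin n → ℝ) →ᵇ ℝ),
      (⨆ x, (((θ x : ℝ) : EReal) - G t x)) ≠ ⊤ →
      ∃ m : SignedMeasure (Fin n → ℝ), Integrable (fun st => 1 + ‖st‖) m.totalVariation ∧
        ∀ x : (Fin n → ℝ) →ᵇ ℝ, θ x = sInt m (fun st => (1 + ‖st‖) * x st))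
    (hfeas : ∃ ε : ℝ, 0 < ε ∧ ∃ (x : Fin (T + 1) → (Fin n → ℝ) →ᵇ ℝ)
        (z : Fin T → (Fin (T + 1) → Fin n → ℝ) → (Fin n → ℝ)),
      (∀ t, G t (x t) ≠ ⊤) ∧ IsStrategy z ∧
      ∀ s, uhat s + ε * psiM s ≤ gains z s + ∑ t, (1 + ‖s t‖) * x t (s t))
    (φ : ℝ) (hφ : ∀ (x : Fin (T + 1) → (Fin n → ℝ) →ᵇ ℝ) (z : Fin T → Pth T n → (Fin n → ℝ))
      (g : Fin (T + 1) → ℝ), IsStrategy z → (∀ t, G t (x t) ≤ (g t : EReal)) →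
      (∀ s, uhat s ≤ gains z s + ∑ t, (1 + ‖s t‖) * x t (s t)) → φ ≤ ∑ t, g t) :
    ∃ lam : Measure (Pth T n), Integrable psiM lam ∧
      (∀ z, IsStrategy z → ∫ s, gains z s ∂lam = 0) ∧ Integrable uhat lam ∧
      ∀ (x : Fin (T + 1) → (Fin n → ℝ) →ᵇ ℝ) (g : Fin (T + 1) → ℝ),
        (∀ t, G t (x t) ≤ (g t : EReal)) →
        ∑ t, ∫ s, (1 + ‖s t‖) * x t (s t) ∂lam - ∫ s, uhat s ∂lam + φ ≤ ∑ t, g t := by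
  obtain ⟨ε, hε, xb, zb, hxb, hzb, hb⟩ := hfeas
  have hgb : ∀ t, ∃ g : ℝ, G t (xb t) = g := fun t =>
    ⟨(G t (xb t)).toReal, (EReal.coe_toReal (hxb t) ((hGproper t).2 _)).symm⟩
  choose gb hgb using hgb
  -- The epigraph of the value function of the problem with claim `û + ψ * u`.
  set A : Set ((Pth T n →ᵇ ℝ) × ℝ) := {p | ∃ (x : Fin (T + 1) → (Fin n → ℝ) →ᵇ ℝ)
    (z : Fin T → Pth T n → (Fin n → ℝ)) (g : Fin (T + 1) → ℝ), IsStrategy z ∧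
    (∀ t, G t (x t) ≤ (g t : EReal)) ∧ ∑ t, g t ≤ p.2 ∧
    ∀ s, uhat s + psiM s * p.1 s ≤ gains z s + ∑ t, (1 + ‖s t‖) * x t (s t)} with hAdef
  have hA : Convex ℝ A := by
    rintro ⟨u, r⟩ ⟨x, z, g, hz, hG, hg, h⟩ ⟨u', r'⟩ ⟨x', z', g', hz', hG', hg', h'⟩ a b ha hb' hab
    refine ⟨fun t => a • x t + b • x' t, fun t s => a • z t s + b • z' t s,
      fun t => a * g t + b * g' t, hz.add_smul hz' a b, fun t => ?_, ?_, fun s => ?_⟩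
    · refine (hGconv t _ _ a b ha hb' hab).trans ?_
      rw [EReal.coe_add, EReal.coe_mul, EReal.coe_mul]
      refine add_le_add (mul_le_mul_of_nonneg_left (hG t) (by exact_mod_cast ha))
        (mul_le_mul_of_nonneg_left (hG' t) (by exact_mod_cast hb'))
    · rw [Finset.sum_add_distrib, ← Finset.mul_sum, ← Finset.mul_sum]
      change _ ≤ a * r + b * r'
      gcongr
    · rw [gains_add_smul]
      change uhat s + psiM s * (a * u s + b * u' s) ≤ a * gains z s + b * gains z' s +
        ∑ t, (1 + ‖s t‖) * (a * x t (s t) + b * x' t (s t))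
      have e : ∑ t, (1 + ‖s t‖) * (a * x t (s t) + b * x' t (s t)) =
          a * ∑ t, (1 + ‖s t‖) * x t (s t) + b * ∑ t, (1 + ‖s t‖) * x' t (s t) := by
        rw [Finset.mul_sum, Finset.mul_sum, ← Finset.sum_add_distrib]
        exact Finset.sum_congr rfl fun t _ => by ring
      rw [e]
      have h1 := mul_le_mul_of_nonneg_left (h s) ha
      have h2 := mul_le_mul_of_nonneg_left (h' s) hb'
      have h3 : uhat s = a * uhat s + b * uhat s := by rw [← add_mul, hab, one_mul]
      simp only at h1 h2
      linarith
  have hφA : ∀ r, ((0 : Pth T n →ᵇ ℝ), r) ∈ A → φ ≤ r := by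
    rintro r ⟨x, z, g, hz, hG, hg, h⟩
    exact (hφ x z g hz hG (fun s => by simpa using h s)).trans hg
  obtain ⟨θ, hθ⟩ := hb_sep A hA φ hφA ε (∑ t, gb t) hε (by
    intro u hu r hr
    refine ⟨xb, zb, gb, hzb, fun t => (hgb t).le, hr, fun s => ?_⟩
    refine le_trans ?_ (hb s)
    have h1 := (le_abs_self _).trans ((u.norm_coe_le_norm s).trans hu.le)
    have h2 := psiM_pos s
    change uhat s + psiM s * u s ≤ _
    nlinarith)
  have hb0 : ∀ s, uhat s ≤ gains zb s + ∑ t, (1 + ‖s t‖) * xb t (s t) := fun s => by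
    have := hb s; have := psiM_pos s; nlinarith
  -- A direction `u` along which the superhedging constraint can be relaxed at bounded cost has
  -- `θ u ≤ 0`; it is applied to nonpositive `u` and to gains of strategies.
  have hneg : ∀ (u : Pth T n →ᵇ ℝ) , (∀ N : ℝ, 0 ≤ N → (N • u, ∑ t, gb t) ∈ A) → θ u ≤ 0 := by
    intro u hu
    by_contra! hlt
    have h1 := hθ _ _ (hu ((|∑ t, gb t - φ| + 1) / θ u) (by positivity))
    rw [map_smul, smul_eq_mul, div_mul_cancel₀ _ hlt.ne'] at h1
    have := le_abs_self (∑ t, gb t - φ)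
    linarith
  have hpos : ∀ u : Pth T n →ᵇ ℝ, (∀ s, 0 ≤ u s) → 0 ≤ θ u := by
    intro u hu
    have := hneg (-u) (fun N hN => ⟨xb, zb, gb, hzb, fun t => (hgb t).le, le_rfl, fun s => by
      refine le_trans ?_ (hb0 s)
      change uhat s + psiM s * (N * -u s) ≤ _
      have : 0 ≤ psiM s * (N * u s) := mul_nonneg (psiM_pos s).le (mul_nonneg hN (hu s))
      linarith⟩)
    rw [map_neg] at this
    linarith
  have hmono : ∀ u v : Pth T n →ᵇ ℝ, (∀ s, u s ≤ v s) → θ u ≤ θ v := by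
    intro u v h
    have := hpos (v - u) (fun x => by simpa using h x)
    rw [map_sub] at this; linarith
  -- Perturbing `û` by `x - xb t` in the `t`-th coordinate shows that the conjugate of `G t` is
  -- finite at the `t`-th marginal of `θ`.
  have hmarg : ∀ t, ∃ m : SignedMeasure (Fin n → ℝ),
      Integrable (fun st => 1 + ‖st‖) m.totalVariation ∧
      ∀ x : (Fin n → ℝ) →ᵇ ℝ, θ (embC t x) = sInt m (fun st => (1 + ‖st‖) * x st) := by
    intro t
    refine hdomG t (StrongDual.toWeakDual (θ.comp (embC t))) (ne_top_of_le_ne_top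
      (EReal.coe_ne_top (θ (embC t (xb t)) + ∑ r, gb r - φ - gb t)) ?_)
    refine iSup_le fun x => ?_
    by_cases htop : G t x = ⊤
    · rw [htop]; simp
    obtain ⟨g, hg⟩ : ∃ g : ℝ, G t x = g :=
      ⟨(G t x).toReal, (EReal.coe_toReal htop ((hGproper t).2 _)).symm⟩
    rw [hg, ← EReal.coe_sub, EReal.coe_le_coe_iff]
    change θ (embC t x) - g ≤ _
    have h1 := hθ (embC t x - embC t (xb t)) (∑ r, gb r - gb t + g) (by
      refine ⟨Function.update xb t x, zb, Function.update gb t g, hzb, fun r => ?_, ?_, fun s => ?_⟩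
      · by_cases hr : r = t
        · subst hr; simp [hg]
        · simp [hr, hgb]
      · rw [Finset.sum_update_of_mem (Finset.mem_univ t),
          ← Finset.add_sum_erase _ _ (Finset.mem_univ t), Finset.sdiff_singleton_eq_erase]
        linarith
      · have e1 : psiM s * (embC t x - embC t (xb t)) s =
            (1 + ‖s t‖) * x (s t) - (1 + ‖s t‖) * xb t (s t) := by
          rw [← psiM_mul_embC, ← psiM_mul_embC]
          change psiM s * (embC t x s - embC t (xb t) s) = _
          ring
        have e2 : ∑ r, (1 + ‖s r‖) * (Function.update xb t x r) (s r) =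
            ∑ r, (1 + ‖s r‖) * xb r (s r) + ((1 + ‖s t‖) * x (s t) - (1 + ‖s t‖) * xb t (s t)) := by
          rw [← Finset.add_sum_erase _ _ (Finset.mem_univ t),
            ← Finset.add_sum_erase (a := t) _ (fun r => (1 + ‖s r‖) * xb r (s r))
              (Finset.mem_univ t)]
          rw [Finset.sum_congr rfl (g := fun r => (1 + ‖s r‖) * xb r (s r))]
          · simp only [Function.update_self]; ring
          · intro r hr
            rw [Function.update_of_ne (Finset.ne_of_mem_erase hr)]
        change uhat s + psiM s * (embC t x - embC t (xb t)) s ≤ _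
        rw [e1, e2]
        have := hb0 s
        linarith)
    rw [map_sub] at h1
    linarith
  -- The marginals of `θ` are represented by measures, so `θ` does not charge infinity.
  have htight : Tendsto (fun k => θ (1 - ccB (etaC (Pth T n) k))) atTop (𝓝 0) := by
    have h1 : ∀ t, Tendsto (fun k => θ (embC t (chi (Fin n → ℝ) k))) atTop (𝓝 0) := by
      intro t
      obtain ⟨m, hm, hrep⟩ := hmarg t
      simp_rw [hrep]
      exact sInt_chi_tendsto m hm
    have h2 : Tendsto (fun k => (T + 1 : ℝ) * ∑ t, θ (embC t (chi (Fin n → ℝ) k))) atTop (𝓝 0) := by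
      have := (tendsto_finsetSum Finset.univ fun t _ => h1 t).const_mul (T + 1 : ℝ)
      simpa using this
    refine squeeze_zero (fun k => ?_) (fun k => ?_) h2
    · rw [one_sub_etaC]; exact hpos _ (chi_nonneg k)
    · rw [one_sub_etaC, ← map_sum, ← smul_eq_mul, ← map_smul]
      apply hmono
      intro s
      refine (chi_path_le k s).trans (le_of_eq ?_)
      change _ = (T + 1 : ℝ) * (∑ t, embC t (chi (Fin n → ℝ) k)) s
      rw [BoundedContinuousFunction.coe_sum, Finset.sum_apply]
  obtain ⟨ν, hν, hνθ⟩ := riesz_tight θ hpos (etaC (Pth T n))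
    (fun k s => by rw [etaC_apply]; linarith [chi_le_one k s])
    (fun k s => by rw [etaC_apply]; linarith [chi_nonneg k s])
    (fun s => by
      simp_rw [etaC_apply]
      simpa using (chi_tendsto s).const_sub 1) htight
  obtain ⟨lam, hlam, hlamν⟩ := riesz_weight ν psiM psiM_continuous one_le_psiM
  have hrep : ∀ w : Pth T n →ᵇ ℝ, ∫ s, psiM s * w s ∂lam = θ w := fun w => by
    rw [hlamν, hνθ]
  have hmart : ∀ z, IsStrategy z → ∫ s, gains z s ∂lam = 0 := by
    apply martingale_of_bcf hlam
    intro t i w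
    have hbd : ∀ s : Pth T n, |w (cutP t s) * (s t.succ i - s t.castSucc i)| ≤
        (‖w‖ * 2) * psiM s := by
      intro s
      rw [abs_mul, mul_assoc]
      exact mul_le_mul (w.norm_coe_le_norm _) (incr_le t i s) (abs_nonneg _) (norm_nonneg _)
    have hcont : Continuous fun s : Pth T n => w (cutP t s) * (s t.succ i - s t.castSucc i) := by
      have := cutP_continuous (n := n) t
      fun_prop
    have hint := hrep (divPsi _ hcont _ hbd)
    simp_rw [psiM_mul_divPsi] at hint
    rw [hint]
    have hmem : ∀ N : ℝ, (N • divPsi _ hcont _ hbd, ∑ t, gb t) ∈ A := by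
      intro N
      refine ⟨xb, fun r s => (1 : ℝ) • zb r s + N • oneStrat t i w r s, gb,
        hzb.add_smul (isStrategy_oneStrat t i w) 1 N, fun t => (hgb t).le, le_rfl, fun s => ?_⟩
      rw [gains_add_smul, gains_oneStrat]
      change uhat s + psiM s * (N * divPsi _ hcont _ hbd s) ≤ _
      rw [mul_left_comm, psiM_mul_divPsi]
      have := hb0 s
      linarith
    apply le_antisymm
    · exact hneg _ fun N _ => hmem N
    · have := hneg (-divPsi _ hcont _ hbd) fun N _ => by
        have e : N • -divPsi _ hcont _ hbd = (-N) • divPsi _ hcont _ hbd := by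
          ext s
          change N * -(divPsi _ hcont _ hbd s) = -N * divPsi _ hcont _ hbd s
          ring
        rw [e]
        exact hmem (-N)
      rw [map_neg] at this
      linarith
  -- `û / ψ` is approximated from above by bounded continuous `F k`. Since `û ≤ ψ * F k`, the
  -- perturbation `∑ₜ xₜ - ψ * F k` of the claim is admissible at cost `∑ₜ gₜ` without trading.
  have hfusc : UpperSemicontinuous fun s => uhat s / psiM s := by
    intro s a ha
    have h1 : UpperSemicontinuous fun s => uhat s + (-(a * psiM s)) :=
      husc.add (by
        have := psiM_continuous (T := T) (n := n)
        exact Continuous.upperSemicontinuous (by fun_prop))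
    rw [div_lt_iff₀ (psiM_pos s)] at ha
    filter_upwards [h1 s 0 (by linarith)] with s' hs'
    rw [div_lt_iff₀ (psiM_pos s')]
    linarith
  have hfK : ∀ s, uhat s / psiM s ≤ K := fun s => by
    rw [div_le_iff₀ (psiM_pos s)]; exact huK s
  obtain ⟨F, hF1, hF2, hF3⟩ := usc_approx _ hfusc K hfK
  have hmul : ∀ s, psiM s * (uhat s / psiM s) = uhat s := fun s => by
    have := (psiM_pos s).ne'
    field_simp
  have hfin : ∀ (x : Fin (T + 1) → (Fin n → ℝ) →ᵇ ℝ) (g : Fin (T + 1) → ℝ),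
        (∀ t, G t (x t) ≤ (g t : EReal)) → Integrable uhat lam ∧
        ∑ t, ∫ s, (1 + ‖s t‖) * x t (s t) ∂lam + φ - ∑ t, g t ≤ ∫ s, uhat s ∂lam := by
    intro x g hg
    have hk : ∀ k, ∑ t, ∫ s, (1 + ‖s t‖) * x t (s t) ∂lam + φ - ∑ t, g t ≤
        ∫ s, psiM s * F k s ∂lam := by
      intro k
      have h1 := hθ (∑ t, embC t (x t) - F k) (∑ t, g t) (by
        refine ⟨x, fun _ _ => 0, g, isStrategy_zero, hg, le_rfl, fun s => ?_⟩
        rw [gains_zero, zero_add]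
        have e1 : psiM s * (∑ t, embC t (x t) - F k) s =
            ∑ t, (1 + ‖s t‖) * x t (s t) - psiM s * F k s := by
          rw [BoundedContinuousFunction.coe_sub, Pi.sub_apply, BoundedContinuousFunction.coe_sum,
            Finset.sum_apply, mul_sub, Finset.mul_sum]
          simp_rw [psiM_mul_embC]
        change uhat s + psiM s * (∑ t, embC t (x t) - F k) s ≤ _
        rw [e1]
        have := mul_le_mul_of_nonneg_left (hF1 k s) (psiM_pos s).le
        rw [hmul] at this
        linarith)
      rw [map_sub, map_sum, ← hrep (F k)] at h1
      simp_rw [← hrep, psiM_mul_embC] at h1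
      linarith
    have := fatou_usc lam psiM (fun s => uhat s / psiM s) (fun k s => F k s) |K| _
      (fun s => (psiM_pos s).le) hlam (by
        simp_rw [hmul]; exact husc.measurable) (fun k =>
          hlam.mul_bdd (c := ‖F k‖) (F k).continuous.aestronglyMeasurable
            (Eventually.of_forall (F k).norm_coe_le_norm)) hF2
      (fun s => (hfK s).trans (le_abs_self _)) hF3 hk
    simp_rw [hmul] at this
    exact this
  refine ⟨lam, hlam, hmart, (hfin xb gb fun t => (hgb t).le).1, fun x g hg => ?_⟩
  have := (hfin x g hg).2
  linarith

/-! ### Extended-real arithmetic and weak duality -/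

lemma EReal_coe_sum {ι : Type*} (s : Finset ι) (f : ι → ℝ) :
    ((∑ i ∈ s, f i : ℝ) : EReal) = ∑ i ∈ s, (f i : EReal) := by
  induction s using Finset.induction_on with
  | empty => simp
  | insert a s ha ih => rw [Finset.sum_insert ha, Finset.sum_insert ha, EReal.coe_add, ih]

lemma EReal_sum_ne_bot {ι : Type*} (s : Finset ι) (f : ι → EReal) (h : ∀ i, f i ≠ ⊥) :
    ∑ i ∈ s, f i ≠ ⊥ := by
  induction s using Finset.induction_on with
  | empty => simp
  | insert a s ha ih =>
    rw [Finset.sum_insert ha, Ne, EReal.add_eq_bot_iff, not_or]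
    exact ⟨h a, ih⟩

lemma EReal_sum_eq_top {ι : Type*} [Fintype ι] (f : ι → EReal) (h : ∀ i, f i ≠ ⊥) (i : ι)
    (hi : f i = ⊤) : ∑ j, f j = ⊤ := by
  rw [← Finset.add_sum_erase _ _ (Finset.mem_univ i), hi]
  exact EReal.top_add_of_ne_bot (EReal_sum_ne_bot _ _ h)

lemma exists_coe {x : EReal} (h : x ≠ ⊤) (h' : x ≠ ⊥) : ∃ r : ℝ, x = r :=
  ⟨x.toReal, (EReal.coe_toReal h h').symm⟩

/-- Conjugates of proper functions never take the value `-∞`. -/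
lemma conj_ne_bot {E : Type*} (a : E → ℝ) (G : E → EReal) (hG : EProper G) :
    (⨆ x, ((a x : EReal) - G x)) ≠ ⊥ := by
  obtain ⟨⟨x, hx⟩, hb⟩ := hG
  obtain ⟨g, hg⟩ := exists_coe hx (hb x)
  intro h
  have := le_iSup (fun x => ((a x : EReal) - G x)) x
  rw [h, hg, ← EReal.coe_sub] at this
  exact EReal.coe_ne_bot _ (le_bot_iff.1 this)

/-- A joint bound on `∑ₜ (aₜ(xₜ) - Gₜ(xₜ))` over all families `x` bounds the sum of the conjugates.
Finiteness of the conjugates comes from varying one `xₜ` at a time. -/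
lemma sum_conj_le {ι E : Type*} [Fintype ι] [DecidableEq ι] (a : ι → E → ℝ) (G : ι → E → EReal)
    (hG : ∀ t, EProper (G t)) (c : ℝ)
    (h : ∀ (x : ι → E) (g : ι → ℝ), (∀ t, G t (x t) ≤ (g t : EReal)) →
      ∑ t, (a t (x t) - g t) ≤ c) :
    ∑ t, (⨆ x, ((a t x : EReal) - G t x)) ≤ (c : EReal) := by
  -- A point of the domain of each `G t`.
  have hx0 : ∀ t, ∃ x, ∃ g : ℝ, G t x = g := fun t => by
    obtain ⟨⟨x, hx⟩, hb⟩ := hG t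
    exact ⟨x, exists_coe hx (hb x)⟩
  choose x0 g0 hg0 using hx0
  have htop : ∀ t, (⨆ x, ((a t x : EReal) - G t x)) ≠ ⊤ := by
    intro t
    refine ne_top_of_le_ne_top
      (EReal.coe_ne_top (c - ∑ r ∈ Finset.univ.erase t, (a r (x0 r) - g0 r))) (iSup_le fun x => ?_)
    by_cases hx : G t x = ⊤
    · rw [hx]; simp
    obtain ⟨g, hg⟩ := exists_coe hx ((hG t).2 x)
    rw [hg, ← EReal.coe_sub, EReal.coe_le_coe_iff]
    have h1 := h (Function.update x0 t x) (Function.update g0 t g) (fun r => by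
      by_cases hr : r = t
      · subst hr; simp [hg]
      · simp [hr, hg0])
    rw [← Finset.add_sum_erase _ _ (Finset.mem_univ t)] at h1
    rw [Finset.sum_congr rfl (g := fun r => a r (x0 r) - g0 r)] at h1
    · simp only [Function.update_self] at h1
      linarith
    · intro r hr
      rw [Function.update_of_ne (Finset.ne_of_mem_erase hr),
        Function.update_of_ne (Finset.ne_of_mem_erase hr)]
  have hγ : ∀ t, ∃ γ : ℝ, (⨆ x, ((a t x : EReal) - G t x)) = γ := fun t =>
    exists_coe (htop t) (conj_ne_bot _ _ (hG t))
  choose γ hγ using hγ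
  simp_rw [hγ]
  rw [← EReal_coe_sum, EReal.coe_le_coe_iff]
  refine le_of_forall_pos_le_add fun ε hε => ?_
  set δ := ε / (Fintype.card ι + 1) with hδ
  have hδ0 : 0 < δ := by positivity
  have hx : ∀ t, ∃ x, ∃ g : ℝ, G t x = g ∧ γ t - δ < a t x - g := by
    intro t
    have h1 : ((γ t - δ : ℝ) : EReal) < ⨆ x, ((a t x : EReal) - G t x) := by
      rw [hγ, EReal.coe_lt_coe_iff]; linarith
    obtain ⟨x, hx⟩ := lt_iSup_iff.1 h1
    by_cases hxt : G t x = ⊤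
    · rw [hxt] at hx; simp at hx
    obtain ⟨g, hg⟩ := exists_coe hxt ((hG t).2 x)
    rw [hg, ← EReal.coe_sub, EReal.coe_lt_coe_iff] at hx
    exact ⟨x, g, hg, hx⟩
  choose x g hxg hlt using hx
  have h1 := h x g fun t => (hxg t).le
  have h2 : ∑ t, (γ t - δ) ≤ ∑ t, (a t (x t) - g t) := Finset.sum_le_sum fun t _ => (hlt t).le
  rw [Finset.sum_sub_distrib, Finset.sum_const, Finset.card_univ, nsmul_eq_mul] at h2
  have h3 : (Fintype.card ι : ℝ) * δ ≤ ε := by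
    rw [hδ, mul_div_assoc', div_le_iff₀ (by positivity)]
    nlinarith
  linarith

lemma posPart'_coe (x : ℝ) : EReal.posPart' (x : EReal) = ENNReal.ofReal x := by
  simp [EReal.posPart']

lemma coe_toReal_eq_coe {x : ℝ≥0∞} (hx : x ≠ ⊤) : ((x.toReal : ℝ) : EReal) = x := by
  lift x to NNReal using hx
  rfl

lemma eInt_of_integrable {X : Type*} [MeasurableSpace X] (μ : Measure X) (f : X → ℝ)
    (hf : Integrable f μ) : eInt μ (fun s => ((f s : ℝ) : EReal)) = ((∫ s, f s ∂μ : ℝ) : EReal) := by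
  have h1 := hf.lintegral_lt_top
  have h2 := hf.neg.lintegral_lt_top
  simp only [Pi.neg_apply] at h2
  unfold eInt
  simp only [← EReal.coe_neg, posPart'_coe]
  rw [if_neg h1.ne, integral_eq_lintegral_pos_part_sub_lintegral_neg_part hf, EReal.coe_sub,
    coe_toReal_eq_coe h1.ne, coe_toReal_eq_coe h2.ne]

lemma eInt_of_not_integrable {X : Type*} [MeasurableSpace X] (μ : Measure X) (f : X → ℝ)
    (hm : Measurable f) (hf : ¬ Integrable f μ) (h1 : ∫⁻ s, ENNReal.ofReal (f s) ∂μ ≠ ⊤) :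
    eInt μ (fun s => ((f s : ℝ) : EReal)) = ⊥ := by
  have h2 : ∫⁻ s, ENNReal.ofReal (-f s) ∂μ = ⊤ := by
    by_contra h2
    apply hf
    refine ⟨hm.aestronglyMeasurable, ?_⟩
    rw [hasFiniteIntegral_iff_norm]
    have h3 : ∀ s, ENNReal.ofReal ‖f s‖ ≤ ENNReal.ofReal (f s) + ENNReal.ofReal (-f s) := by
      intro s
      rcases le_total 0 (f s) with h | h
      · rw [Real.norm_of_nonneg h]; exact le_self_add
      · rw [Real.norm_of_nonpos h]; exact le_add_self
    refine (lintegral_mono h3).trans_lt ?_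
    rw [lintegral_add_left (by fun_prop)]
    exact ENNReal.add_lt_top.2 ⟨lt_top_iff_ne_top.2 h1, lt_top_iff_ne_top.2 h2⟩
  unfold eInt
  simp only [← EReal.coe_neg, posPart'_coe]
  rw [if_neg h1, h2, EReal.coe_ennreal_top, EReal.sub_top]

lemma integral_marginal {T n : ℕ} (lam : Measure (Pth T n)) (t : Fin (T + 1))
    (x : (Fin n → ℝ) →ᵇ ℝ) :
    ∫ st, (1 + ‖st‖) * x st ∂(lam.map fun s => s t) = ∫ s, (1 + ‖s t‖) * x (s t) ∂lam :=
  integral_map (measurable_pi_apply t).aemeasurable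
    (Continuous.aestronglyMeasurable (by fun_prop))

/-- Weak duality: integrate the superhedging inequality against the martingale measure. If `û` is
not integrable, then `∫ û dλ = -∞` because `û ≤ K * ψ`, and the dual value is `+∞`. -/
lemma weak_duality {T n : ℕ} (uhat : Pth T n → ℝ) (husc : UpperSemicontinuous uhat)
    (K : ℝ) (huK : ∀ s, uhat s ≤ K * psiM s)
    (G : Fin (T + 1) → ((Fin n → ℝ) →ᵇ ℝ) → EReal) (hGproper : ∀ t, EProper (G t))
    (lam : Measure (Pth T n)) (hlam : Integrable psiM lam)
    (hmart : ∀ z, IsStrategy z → ∫ s, gains z s ∂lam = 0)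
    (x : Fin (T + 1) → (Fin n → ℝ) →ᵇ ℝ) (z : Fin T → Pth T n → (Fin n → ℝ))
    (hz : IsStrategy z)
    (hfeas : ∀ s, uhat s ≤ gains z s + ∑ t, (1 + ‖s t‖) * x t (s t)) :
    -(∑ t, G t (x t)) ≤ (∑ t, ⨆ x : (Fin n → ℝ) →ᵇ ℝ,
      (((∫ st, (1 + ‖st‖) * x st ∂(lam.map fun s => s t) : ℝ) : EReal) - G t x)) +
        (-(eInt lam (fun s => ((uhat s : ℝ) : EReal)))) := by
  by_cases htop : ∃ t, G t (x t) = ⊤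
  · obtain ⟨t, ht⟩ := htop
    rw [EReal_sum_eq_top (fun t => G t (x t)) (fun t => (hGproper t).2 _) t ht]
    simp
  push Not at htop
  choose g hg using fun t => exists_coe (htop t) ((hGproper t).2 (x t))
  by_cases hint : Integrable uhat lam
  · rw [eInt_of_integrable _ _ hint]
    have h1 : ∀ t, ((∫ s, (1 + ‖s t‖) * x t (s t) ∂lam - g t : ℝ) : EReal) ≤
        ⨆ x : (Fin n → ℝ) →ᵇ ℝ,
          (((∫ st, (1 + ‖st‖) * x st ∂(lam.map fun s => s t) : ℝ) : EReal) - G t x) := by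
      intro t
      refine le_trans (le_of_eq ?_) (le_iSup _ (x t))
      rw [integral_marginal, hg, EReal.coe_sub]
    refine le_trans ?_ (add_le_add (Finset.sum_le_sum fun t _ => h1 t) le_rfl)
    simp_rw [hg]
    rw [← EReal_coe_sum, ← EReal_coe_sum, ← EReal.coe_neg, ← EReal.coe_neg, ← EReal.coe_add,
      EReal.coe_le_coe_iff, Finset.sum_sub_distrib]
    have hxi : ∀ t, Integrable (fun s : Pth T n => (1 + ‖s t‖) * x t (s t)) lam := fun t =>
      integrable_of_le_psi hlam _ (Continuous.measurable (by fun_prop)) _ (weighted_le t (x t))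
    obtain ⟨hgm, C, hC⟩ := gains_bound hz
    have hgi := integrable_of_le_psi hlam _ hgm C hC
    have h2 : ∫ s, uhat s ∂lam ≤ ∫ s, (gains z s + ∑ t, (1 + ‖s t‖) * x t (s t)) ∂lam :=
      integral_mono hint (hgi.add (integrable_finsetSum _ fun t _ => hxi t)) hfeas
    rw [integral_add hgi (integrable_finsetSum _ fun t _ => hxi t), hmart z hz,
      integral_finsetSum _ fun t _ => hxi t] at h2
    linarith
  · rw [eInt_of_not_integrable _ _ husc.measurable hint]
    · rw [EReal.neg_bot, EReal.add_top_of_ne_bot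
        (EReal_sum_ne_bot _ _ fun t => conj_ne_bot _ _ (hGproper t))]
      exact le_top
    · refine ((lintegral_mono fun s => ENNReal.ofReal_le_ofReal (huK s)).trans_lt
        (hlam.const_mul K).lintegral_lt_top).ne

/-! ### The duality theorem -/

/-- **Theorem (model-independent superhedging duality).**
Assume `dom G_t* ⊆ M_t` for all `t`, `û ≤ Kψ` for some `K`, and that the superhedging
problem remains feasible when `û` is increased by `εψ` for some `ε > 0`.  Then the
infimum of `∑_t G_t*(λ_t) − ∫ û dλ` over nonnegative martingale measures `λ ∈ 𝓜` is
attained and equals the negative of the optimum value of the superhedging problem: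
minimize `∑_t G_t(x_t)` over `x ∈ ∏_t C_t`, `z ∈ N` subject to
`û(s) ≤ ∑_t z_t(s^t)·Δs_{t+1} + ∑_t x_t(s_t)` for all `s`.  (Elements of the weighted
spaces `C_t` are represented by the bounded continuous functions `x/ψ_t`.) -/
theorem stmt5
    {T n : ℕ} (hT : 1 ≤ T)
    (uhat : (Fin (T + 1) → Fin n → ℝ) → ℝ)
    (husc : UpperSemicontinuous uhat)
    (K : ℝ) (huK : ∀ s, uhat s ≤ K * psiM s)
    -- the proper convex cost functions `G_t` on `C_t` and their conjugates
    (G : Fin (T + 1) → ((Fin n → ℝ) →ᵇ ℝ) → EReal)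
    (hGconv : ∀ t, EConvexOn (G t)) (hGproper : ∀ t, EProper (G t))
    (Gstar : Fin (T + 1) → Measure (Fin n → ℝ) → EReal)
    (hGstar : Gstar = fun t ν => ⨆ x : (Fin n → ℝ) →ᵇ ℝ,
      (((∫ st, (1 + ‖st‖) * x st ∂ν : ℝ) : EReal) - G t x))
    -- `dom G_t* ⊆ M_t` (on the norm dual of `C_t`)
    (hdomG : ∀ t, ∀ θ : WeakDual ℝ ((Fin n → ℝ) →ᵇ ℝ),
      (⨆ x, (((θ x : ℝ) : EReal) - G t x)) ≠ ⊤ →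
      ∃ m : SignedMeasure (Fin n → ℝ), Integrable (fun st => 1 + ‖st‖) m.totalVariation ∧
        ∀ x : (Fin n → ℝ) →ᵇ ℝ, θ x = sInt m (fun st => (1 + ‖st‖) * x st))
    -- feasibility of the superhedging problem with `û` increased by `εψ`
    (hfeas : ∃ ε : ℝ, 0 < ε ∧ ∃ (x : Fin (T + 1) → (Fin n → ℝ) →ᵇ ℝ)
        (z : Fin T → (Fin (T + 1) → Fin n → ℝ) → (Fin n → ℝ)),
      (∀ t, G t (x t) ≠ ⊤) ∧ IsStrategy z ∧
      ∀ s, uhat s + ε * psiM s ≤ gains z s + ∑ t, (1 + ‖s t‖) * x t (s t))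
    -- the set `𝓜` of nonnegative martingale measures (in `M`) and the dual objective
    (Mart : Set (Measure (Fin (T + 1) → Fin n → ℝ)))
    (hMart : Mart = {lam | Integrable psiM lam ∧
      ∀ z, IsStrategy z → ∫ s, gains z s ∂lam = 0})
    (objD : Measure (Fin (T + 1) → Fin n → ℝ) → EReal)
    (hobjD : objD = fun lam =>
      (∑ t, Gstar t (lam.map (fun s => s t))) +
        (-(eInt lam (fun s => ((uhat s : ℝ) : EReal)))))
    -- the superhedging problem (its feasible set and objective)
    (FeasP : Set ((Fin (T + 1) → (Fin n → ℝ) →ᵇ ℝ) ×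
      (Fin T → (Fin (T + 1) → Fin n → ℝ) → (Fin n → ℝ))))
    (hFeasP : FeasP = {p | IsStrategy p.2 ∧
      ∀ s, uhat s ≤ gains p.2 s + ∑ t, (1 + ‖s t‖) * p.1 t (s t)})
    (objP : (Fin (T + 1) → (Fin n → ℝ) →ᵇ ℝ) ×
      (Fin T → (Fin (T + 1) → Fin n → ℝ) → (Fin n → ℝ)) → EReal)
    (hobjP : objP = fun p => ∑ t, G t (p.1 t)) :
    -- the dual optimum is attained and there is no duality gap
    (∃ lam ∈ Mart, objD lam = ⨅ lam' ∈ Mart, objD lam') ∧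
    (⨅ lam ∈ Mart, objD lam) = -(⨅ p ∈ FeasP, objP p) := by
  have hweak : ∀ lam ∈ Mart, -(⨅ p ∈ FeasP, objP p) ≤ objD lam := by
    intro lam hl
    rw [EReal.neg_le]
    refine le_iInf₂ fun p hp => ?_
    rw [EReal.neg_le]
    subst hGstar hMart hobjD hFeasP hobjP
    exact weak_duality uhat husc K huK G hGproper lam hl.1 hl.2 p.1 p.2 hp.1 hp.2
  -- A martingale measure whose dual value is at most `-inf P` is optimal, by weak duality.
  suffices hex : ∃ lam ∈ Mart, objD lam ≤ -(⨅ p ∈ FeasP, objP p) by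
    obtain ⟨lam, hlam, hle⟩ := hex
    exact ⟨⟨lam, hlam, le_antisymm (le_iInf₂ fun l hl => hle.trans (hweak l hl))
      (iInf₂_le lam hlam)⟩, le_antisymm ((iInf₂_le lam hlam).trans hle) (le_iInf₂ hweak)⟩
  by_cases hbot : (⨅ p ∈ FeasP, objP p) = ⊥
  · -- If `inf P = -∞`, the bound is trivial and the zero measure will do.
    rw [hbot, EReal.neg_bot]
    refine ⟨0, ?_, le_top⟩
    rw [hMart]
    exact ⟨integrable_zero_measure, fun z _ => integral_zero_measure _⟩
  have htop : (⨅ p ∈ FeasP, objP p) ≠ ⊤ := by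
    obtain ⟨ε, hε, x, z, hx, hz, h⟩ := hfeas
    choose g hg using fun t => exists_coe (hx t) ((hGproper t).2 (x t))
    refine ne_top_of_le_ne_top (EReal.coe_ne_top (∑ t, g t)) ?_
    have hmem : (x, z) ∈ FeasP := by
      rw [hFeasP]
      refine ⟨hz, fun s => ?_⟩
      have := h s
      have := psiM_pos s
      change uhat s ≤ gains z s + ∑ t, (1 + ‖s t‖) * x t (s t)
      nlinarith
    refine (iInf₂_le (x, z) hmem).trans ?_
    rw [hobjP, EReal_coe_sum]
    simp_rw [hg]
    exact le_rfl
  obtain ⟨φ, hφ⟩ := exists_coe htop hbot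
  obtain ⟨lam, hlam, hmart, hint, hle⟩ := core uhat husc K huK G hGconv hGproper hdomG hfeas φ (by
    intro x z g hz hg h
    rw [← EReal.coe_le_coe_iff, ← hφ, EReal_coe_sum]
    subst hFeasP hobjP
    exact (iInf₂_le (x, z) ⟨hz, h⟩).trans (Finset.sum_le_sum fun t _ => hg t))
  refine ⟨lam, by rw [hMart]; exact ⟨hlam, hmart⟩, ?_⟩
  simp only [hobjD, hGstar]
  rw [hφ, eInt_of_integrable _ _ hint]
  have h1 := sum_conj_le (fun t (x : (Fin n → ℝ) →ᵇ ℝ) =>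
    ∫ st, (1 + ‖st‖) * x st ∂(lam.map fun s : Pth T n => s t)) G hGproper
    (∫ s, uhat s ∂lam - φ) (by
      intro x g hg
      have := hle x g hg
      simp_rw [integral_marginal]
      rw [Finset.sum_sub_distrib]
      linarith)
  refine (add_le_add h1 le_rfl).trans (le_of_eq ?_)
  rw [← EReal.coe_neg, ← EReal.coe_add, ← EReal.coe_neg]
  congr 1
  ring

end
end

section
/- Assume there exist v̄ ∈ L^∞(S,μ;ℝ^d), β ∈ L^1(S,μ) and δ > 0 such that g_t*(v̄(s),s_t) ≤ β(s) for all t and h*(v̄(s) + v, s) ≤ β(s) for all v ∈ ℝ^d with |v| ≤ δ. Then for every x feasible in (PR) and every λ feasible in (D), the integrals ∫_S Σ_t g_t(x_t) dμ and ∫_S h(−Σ_t x_t) dμ are finite (the first part of Assumption 1 holds). If in addition μ = ∏_{t=0}^T μ_t, then x_t ∈ L^1(S_t,μ_t;ℝ^d) for every feasible x in (PR). -/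
/-! Fenchel's inequality turns the bounds on the conjugates into affine minorants
`g_t(w, s_t) ≥ w·v̄(s) − β(s)` and `h(w, s) ≥ w·(v̄(s) + v) − β(s)` for `|v| ≤ δ`. Put
`y = ∑ x_t`. Adding the minorants at `w = x_t` and `w = −y`, the terms in `v̄` cancel, so the total
integrand dominates `±δ yᵢ − (T + 2) β` for each coordinate `i` (take `v = ∓δ eᵢ`). A finite objective
therefore forces `y ∈ L¹(μ)`. Since `v̄` is bounded, both `∑ g_t(x_t)` and `h(−y)` are then minorized
by integrable functions, so the integrable positive part of their sum controls the positive part of each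
(`EReal.posPart'_le_add_left`). If `μ` is a product, Fubini yields a choice of the other coordinates
for which `x_t + const` is integrable (`integrable_of_integrable_sum_pi`). -/

open MeasureTheory Filter Set
open scoped ENNReal

noncomputable section

open MeasureTheory Filter Set
open scoped ENNReal

lemma EReal.ofReal_le_posPart' {r : ℝ} {a : EReal} (h : (r : EReal) ≤ a) :
    ENNReal.ofReal r ≤ a.posPart' := by
  unfold EReal.posPart'
  split_ifs with ha
  · exact le_top
  · apply ENNReal.ofReal_le_ofReal
    have := EReal.toReal_le_toReal h (EReal.coe_ne_bot r) ha
    simpa using this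

/-- If `b` is bounded below by the real number `q`, then the positive part of `a` exceeds that of
`a + b` by at most `|q|`. -/
lemma EReal.posPart'_le_add_left {a b : EReal} {q : ℝ} (ha : a ≠ ⊥) (hb : (q : EReal) ≤ b) :
    a.posPart' ≤ (a + b).posPart' + ENNReal.ofReal |q| := by
  induction a with
  | bot => exact absurd rfl ha
  | top =>
    have hb' : b ≠ ⊥ := ne_bot_of_le_ne_bot (EReal.coe_ne_bot q) hb
    simp [EReal.top_add_of_ne_bot hb', EReal.posPart']
  | coe a =>
    induction b with
    | bot => simp at hb
    | top => simp [EReal.posPart']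
    | coe b =>
      have hb : q ≤ b := by exact_mod_cast hb
      rw [← EReal.coe_add]
      simp only [EReal.posPart', EReal.coe_ne_top, if_false, EReal.toReal_coe]
      refine le_trans (ENNReal.ofReal_le_ofReal ?_) ENNReal.ofReal_add_le
      linarith [neg_abs_le q]

lemma EReal.coe_sum_le_sum {ι : Type*} (t : Finset ι) (p : ι → ℝ) (F : ι → EReal)
    (h : ∀ i, (p i : EReal) ≤ F i) : ((∑ i ∈ t, p i : ℝ) : EReal) ≤ ∑ i ∈ t, F i := by
  classical
  induction t using Finset.induction_on with
  | empty => simp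
  | insert a t ha ih =>
    rw [Finset.sum_insert ha, Finset.sum_insert ha, EReal.coe_add]
    exact add_le_add (h a) ih

/-- A function whose conjugate is bounded above by `b` at one point is minorized by the corresponding
affine function. -/
lemma coe_le_of_conj_le {d : ℕ} {k : (Fin d → ℝ) → EReal} {v : Fin d → ℝ} {b : ℝ}
    (h : (⨆ w : Fin d → ℝ, (((∑ i, w i * v i : ℝ) : EReal) - k w)) ≤ (b : EReal))
    (w : Fin d → ℝ) : (((∑ i, w i * v i) - b : ℝ) : EReal) ≤ k w := by
  have h1 := (le_iSup (fun w : Fin d → ℝ => (((∑ i, w i * v i : ℝ) : EReal) - k w)) w).trans h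
  generalize k w = z at h1
  induction z with
  | bot => simp at h1
  | top => exact le_top
  | coe z =>
    rw [← EReal.coe_sub] at h1
    have h2 : (∑ i, w i * v i) - z ≤ b := by exact_mod_cast h1
    exact_mod_cast (by linarith : (∑ i, w i * v i) - b ≤ z)

lemma lintegral_posPart'_ne_top_of_eInt_ne_top {X : Type*} [MeasurableSpace X] {μ : Measure X}
    {f : X → EReal} (h : eInt μ f ≠ ⊤) : (∫⁻ s, (f s).posPart' ∂μ) ≠ ⊤ := by
  intro h'
  exact h (by simp [eInt, h'])

lemma eInt_lt_top {X : Type*} [MeasurableSpace X] {μ : Measure X}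
    {f : X → EReal} (h : (∫⁻ s, (f s).posPart' ∂μ) ≠ ⊤) : eInt μ f < ⊤ := by
  unfold eInt
  rw [if_neg h]
  lift (∫⁻ s, (f s).posPart' ∂μ) to NNReal using h with a
  generalize (∫⁻ s, (-(f s)).posPart' ∂μ) = b
  induction b with
  | top => simp
  | coe b =>
    change (((a : ℝ) : EReal)) - (((b : ℝ) : EReal)) < ⊤
    rw [← EReal.coe_sub]
    exact EReal.coe_lt_top _

lemma lintegral_ofReal_abs_ne_top {X : Type*} [MeasurableSpace X] {μ : Measure X}
    {c : X → ℝ} (hc : Integrable c μ) : (∫⁻ s, ENNReal.ofReal |c s| ∂μ) ≠ ⊤ := by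
  have := hc.2
  unfold HasFiniteIntegral at this
  simp only [Real.enorm_eq_ofReal_abs] at this
  exact this.ne

/-- Domination on both sides: if `±f + c ≤ F` with `c` integrable and `F` having integrable positive
part, then `f` is integrable. -/
lemma integrable_of_pm_le {X : Type*} [MeasurableSpace X] {μ : Measure X}
    {f c : X → ℝ} {F : X → EReal} (hf : Measurable f) (hc : Integrable c μ)
    (hF : (∫⁻ s, (F s).posPart' ∂μ) ≠ ⊤)
    (h1 : ∀ s, ((f s + c s : ℝ) : EReal) ≤ F s) (h2 : ∀ s, ((-f s + c s : ℝ) : EReal) ≤ F s) :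
    Integrable f μ := by
  refine ⟨hf.aestronglyMeasurable, ?_⟩
  unfold HasFiniteIntegral
  simp only [Real.enorm_eq_ofReal_abs]
  have key : ∀ s, ENNReal.ofReal |f s| ≤ (F s).posPart' + ENNReal.ofReal |c s| := by
    intro s
    have hle : ENNReal.ofReal (|f s| + c s) ≤ (F s).posPart' := by
      apply EReal.ofReal_le_posPart'
      rcases abs_choice (f s) with h | h <;> rw [h]
      · exact h1 s
      · exact h2 s
    refine le_trans ?_ (add_le_add_left hle _)
    refine le_trans (ENNReal.ofReal_le_ofReal ?_) ENNReal.ofReal_add_le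
    linarith [neg_abs_le (c s)]
  refine (lintegral_mono key).trans_lt ?_
  rw [lintegral_add_right' _ hc.aestronglyMeasurable.aemeasurable.abs.ennreal_ofReal]
  exact ENNReal.add_lt_top.2 ⟨hF.lt_top, (lintegral_ofReal_abs_ne_top hc).lt_top⟩

/-- Integrability of the positive part passes from a sum to a summand when the other summand is
minorized by an integrable function. -/
lemma lintegral_posPart'_ne_top_of_add {X : Type*} [MeasurableSpace X] {μ : Measure X}
    {G H : X → EReal} {q : X → ℝ} (hq : Integrable q μ)
    (hF : (∫⁻ s, (G s + H s).posPart' ∂μ) ≠ ⊤)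
    (hG : ∀ s, G s ≠ ⊥) (hH : ∀ s, (q s : EReal) ≤ H s) :
    (∫⁻ s, (G s).posPart' ∂μ) ≠ ⊤ := by
  refine ne_top_of_le_ne_top ?_
    (lintegral_mono fun s => EReal.posPart'_le_add_left (hG s) (hH s))
  rw [lintegral_add_right' _ hq.aestronglyMeasurable.aemeasurable.abs.ennreal_ofReal]
  exact ENNReal.add_ne_top.2 ⟨hF, lintegral_ofReal_abs_ne_top hq⟩

/-- If a sum of functions of separate coordinates is integrable for a product of probability measures,
then so is each summand: fix the other coordinates at a generic point. -/
lemma integrable_of_integrable_sum_pi {n : ℕ} {S : Fin (n + 1) → Type*}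
    [∀ t, MeasurableSpace (S t)] (μt : ∀ t, Measure (S t)) [∀ t, IsProbabilityMeasure (μt t)]
    {E : Type*} [NormedAddCommGroup E] (x : ∀ t, S t → E)
    (hy : Integrable (fun s : ∀ t, S t => ∑ t, x t (s t)) (Measure.pi μt)) (t : Fin (n + 1)) :
    Integrable (x t) (μt t) := by
  have hmp := (measurePreserving_piFinSuccAbove μt t).symm
  rw [← hmp.integrable_comp_emb (MeasurableEquiv.measurableEmbedding _)] at hy
  obtain ⟨z, hz⟩ := hy.prod_left_ae.exists
  have hz' : Integrable (fun a : S t => x t a + ∑ j, x (t.succAbove j) (z j)) (μt t) := by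
    refine hz.congr (Filter.Eventually.of_forall fun a => ?_)
    simp [MeasurableEquiv.piFinSuccAbove_symm_apply, Fin.insertNthEquiv,
      Fin.sum_univ_succAbove _ t]
  refine (hz'.sub (integrable_const (∑ j, x (t.succAbove j) (z j)))).congr
    (Filter.Eventually.of_forall fun a => ?_)
  simp

/-- **Lemma (sufficient conditions for the first part of Assumption 1).**
Assume there exist `v̄ ∈ L^∞(S,μ;ℝ^d)`, `β ∈ L¹(S,μ)` and `δ > 0` such that
`g_t*(v̄(s),s_t) ≤ β(s)` for all `t` and `h*(v̄(s)+v,s) ≤ β(s)` whenever `|v| ≤ δ`.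
Then for every feasible `x` in (PR) the integrals `∫ ∑_t g_t(x_t) dμ` and
`∫ h(−∑_t x_t) dμ` are finite.  If moreover `μ = ∏_t μ_t`, then `x_t ∈ L¹(μ_t)` for
every feasible `x` in (PR). -/
theorem stmt11
    {T d : ℕ} (S : Fin (T + 1) → Type*)
    [∀ t, TopologicalSpace (S t)] [∀ t, PolishSpace (S t)]
    [∀ t, MeasurableSpace (S t)] [∀ t, BorelSpace (S t)]
    (μ : Measure (∀ t, S t)) [IsProbabilityMeasure μ]
    (μt : ∀ t, Measure (S t)) [∀ t, IsProbabilityMeasure (μt t)]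
    (hμt : ∀ t, μ.map (fun s => s t) = μt t)
    -- the convex normal integrands `g_t` and `h`
    (g : ∀ t, (Fin d → ℝ) → S t → EReal)
    (hgmeas : ∀ t, Measurable (Function.uncurry (g t)))
    (hglsc : ∀ t st, LowerSemicontinuous (fun v => g t v st))
    (hgconv : ∀ t st, EConvexOn (fun v => g t v st))
    (h : (Fin d → ℝ) → (∀ t, S t) → EReal)
    (hmeas : Measurable (Function.uncurry h))
    (hlsc : ∀ s, LowerSemicontinuous (fun v => h v s))
    (hconv : ∀ s, EConvexOn (fun v => h v s))
    -- their domains and conjugates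
    (Dt : ∀ t, S t → Set (Fin d → ℝ)) (hDt : Dt = fun t st => closure {v | g t v st < ⊤})
    (D : (∀ t, S t) → Set (Fin d → ℝ)) (hD : D = fun s => closure {v | h v s < ⊤})
    (gstar : ∀ t, (Fin d → ℝ) → S t → EReal)
    (hgstar : gstar = fun t v st => ⨆ w : Fin d → ℝ, (((∑ i, w i * v i : ℝ) : EReal) - g t w st))
    (hstar : (Fin d → ℝ) → (∀ t, S t) → EReal)
    (hhstar : hstar = fun v s => ⨆ w : Fin d → ℝ, (((∑ i, w i * v i : ℝ) : EReal) - h w s))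
    -- the feasible set `Φ` of (PR) and the objective of (PR)
    (Φ : Set (∀ t, S t → Fin d → ℝ))
    (hΦ : Φ = {x | (∀ t, Measurable (x t)) ∧
      ProdAE μt fun s => (∀ t, x t (s t) ∈ Dt t (s t)) ∧ (-(∑ t, x t (s t)) ∈ D s)})
    (objPR : (∀ t, S t → Fin d → ℝ) → EReal)
    (hobjPR : objPR = fun x => eInt μ fun s =>
      (∑ t, g t (x t (s t)) (s t)) + h (-(∑ t, x t (s t))) s)
    -- the assumption: `v̄ ∈ L^∞`, `β ∈ L¹`, `δ > 0` with the conjugate bounds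
    (vbar : (∀ t, S t) → Fin d → ℝ) (hvmeas : Measurable vbar)
    (Kv : ℝ) (hvbd : ∀ s, ‖vbar s‖ ≤ Kv)
    (β : (∀ t, S t) → ℝ) (hβ : Integrable β μ)
    (δ : ℝ) (hδ : 0 < δ)
    (hgbd : ∀ (s : ∀ t, S t) t, gstar t (vbar s) (s t) ≤ (β s : EReal))
    (hhbd : ∀ (s : ∀ t, S t) (v : Fin d → ℝ), ‖v‖ ≤ δ →
      hstar (vbar s + v) s ≤ (β s : EReal)) :
    -- first part of Assumption 1
    (∀ x ∈ Φ, objPR x ≠ ⊤ →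
      eInt μ (fun s => ∑ t, g t (x t (s t)) (s t)) < ⊤ ∧
      eInt μ (fun s => h (-(∑ t, x t (s t))) s) < ⊤) ∧
    -- integrability in the product case
    (μ = Measure.pi μt → ∀ x ∈ Φ, objPR x ≠ ⊤ → ∀ t, Integrable (x t) (μt t)) := by
  subst hgstar hhstar hobjPR hΦ
  -- Fenchel's inequality for `g_t` and for `h`
  have hgl : ∀ (s : ∀ t, S t) t w,
      (((∑ i, w i * vbar s i) - β s : ℝ) : EReal) ≤ g t w (s t) := fun s t w =>
    coe_le_of_conj_le (hgbd s t) w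
  have hhl : ∀ (s : ∀ t, S t) (v w : Fin d → ℝ), ‖v‖ ≤ δ →
      (((∑ i, w i * (vbar s i + v i)) - β s : ℝ) : EReal) ≤ h w s := fun s v w hv =>
    coe_le_of_conj_le (hhbd s v hv) w
  have main : ∀ x : ∀ t, S t → Fin d → ℝ, (∀ t, Measurable (x t)) →
      eInt μ (fun s => (∑ t, g t (x t (s t)) (s t)) + h (-(∑ t, x t (s t))) s) ≠ ⊤ →
      (eInt μ (fun s => ∑ t, g t (x t (s t)) (s t)) < ⊤ ∧
        eInt μ (fun s => h (-(∑ t, x t (s t))) s) < ⊤) ∧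
      Integrable (fun s : ∀ t, S t => ∑ t, x t (s t)) μ := by
    intro x hx hfin
    have hF := lintegral_posPart'_ne_top_of_eInt_ne_top hfin
    set y : (∀ t, S t) → Fin d → ℝ := fun s => ∑ t, x t (s t) with hy
    set a : (∀ t, S t) → ℝ := fun s => ∑ i, y s i * vbar s i with ha
    have hymeas : Measurable y :=
      Finset.measurable_fun_sum _ fun t _ => (hx t).comp (measurable_pi_apply t)
    have hG : ∀ s, ((a s - (T + 1) * β s : ℝ) : EReal) ≤ ∑ t, g t (x t (s t)) (s t) := by
      intro s
      have h1 := EReal.coe_sum_le_sum Finset.univ _ _ (fun t => hgl s t (x t (s t)))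
      convert h1 using 2
      rw [Finset.sum_sub_distrib, Finset.sum_comm]
      simp only [ha, hy, Finset.sum_apply, Finset.sum_mul]
      simp
    have hH : ∀ s (i : Fin d) (r : ℝ), |r| ≤ δ →
        ((-a s + r * y s i - β s : ℝ) : EReal) ≤ h (-(y s)) s := by
      intro s i r hr
      -- the perturbation `v = -r eᵢ`, paired with `w = -y`, contributes `r yᵢ`
      have h1 := hhl s (Pi.single i (-r)) (-(y s)) (by
        rw [Pi.norm_single]; simpa using hr)
      convert h1 using 2
      simp only [mul_add, Finset.sum_add_distrib, Pi.neg_apply, neg_mul, Finset.sum_neg_distrib, ha]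
      congr 2
      rw [Finset.sum_eq_single i]
      · simp; ring
      · intro j _ hj
        simp [hj]
      · simp
    -- the unperturbed bound, needed separately because `d = 0` leaves no coordinate `i`
    have hH0 : ∀ s, ((-a s - β s : ℝ) : EReal) ≤ h (-(y s)) s := by
      intro s
      have h1 := hhl s 0 (-(y s)) (by simpa using hδ.le)
      convert h1 using 2
      simp [ha]
    have hyi : ∀ i, Integrable (fun s => y s i) μ := by
      intro i
      have hyim : Measurable fun s => y s i := (measurable_pi_apply i).comp hymeas
      have hFl : ∀ s (r : ℝ), |r| ≤ δ → ((r * y s i + -((T + 2) * β s) : ℝ) : EReal) ≤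
          (∑ t, g t (x t (s t)) (s t)) + h (-(y s)) s := by
        intro s r hr
        have h1 := add_le_add (hG s) (hH s i r hr)
        rw [← EReal.coe_add] at h1
        convert h1 using 2
        ring
      have h2 : Integrable (fun s => δ * y s i) μ := by
        refine integrable_of_pm_le (hyim.const_mul δ) (hβ.const_mul ((T : ℝ) + 2)).neg hF
          (fun s => ?_) (fun s => ?_)
        · exact hFl s δ (abs_of_pos hδ).le
        · have := hFl s (-δ) (by rw [abs_neg, abs_of_pos hδ])
          rwa [neg_mul] at this
      have h3 := h2.const_mul δ⁻¹
      simpa [← mul_assoc, inv_mul_cancel₀ hδ.ne'] using h3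
    have hai : Integrable a μ := by
      refine integrable_finsetSum _ fun i _ => ?_
      refine (hyi i).mul_bdd (c := Kv) ?_ (Filter.Eventually.of_forall fun s => ?_)
      · exact ((measurable_pi_apply i).comp hvmeas).aestronglyMeasurable
      · exact (norm_le_pi_norm (vbar s) i).trans (hvbd s)
    refine ⟨⟨eInt_lt_top ?_, eInt_lt_top ?_⟩, Integrable.of_eval hyi⟩
    · exact lintegral_posPart'_ne_top_of_add (hai.neg.sub hβ) hF
        (fun s => ne_bot_of_le_ne_bot (EReal.coe_ne_bot _) (hG s)) hH0
    · refine lintegral_posPart'_ne_top_of_add (hai.sub (hβ.const_mul ((T : ℝ) + 1))) ?_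
        (fun s => ne_bot_of_le_ne_bot (EReal.coe_ne_bot _) (hH0 s)) hG
      simpa only [add_comm] using hF
  refine ⟨fun x hx hfin => (main x hx.1 hfin).1, fun hμ x hx hfin t => ?_⟩
  have hint := (main x hx.1 hfin).2
  rw [hμ] at hint
  exact integrable_of_integrable_sum_pi μt x hint t

end
end

section
/- Let μ_t (t = 0,…,T) be Borel probability measures on Polish spaces S_t. If a sequence (x^ν) of functions on S = S_0×⋯×S_T of the form x^ν(s) = Σ_{t=0}^T (x^ν)^t(s_t), with each (x^ν)^t Borel measurable on S_t, converges ∏_{t=0}^T μ_t-almost everywhere, then there exist sequences ((x̃^ν)^t) of Borel functions on S_t, each converging μ_t-almost everywhere, such that Σ_{t=0}^T (x̃^ν)^t(s_t) = x^ν(s) for all ν. -/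
/-!
Fix a base point `p` of the product and recentre: replace `x ν t` by `x ν t - x ν t (p t)` for every
`t`, and add the total constant `∑ i, x ν i (p i)` back into the component `t = 0`, so that the sum
is unchanged. The recentred component at `r` is the difference of the sums at `Function.update p t r`
and at `p`, so it converges as soon as the sums converge at these two points. A base point that
works for almost every `r` and all `t` exists by Fubini, because resampling one coordinate preserves
the product measure (`measurePreserving_resample`).
-/

open MeasureTheory Filter Set

/-- Replacing one coordinate of a point drawn from a product of probability measures by an
independent draw from the same factor does not change its distribution. -/
theorem measurePreserving_resample {ι : Type*} [Fintype ι] [DecidableEq ι] {S : ι → Type*}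
    [∀ t, MeasurableSpace (S t)] (m : ∀ t, Measure (S t)) [∀ t, IsProbabilityMeasure (m t)]
    (t : ι) :
    MeasurePreserving (fun q : (∀ t, S t) × S t => Function.update q.1 t q.2)
      ((Measure.pi m).prod (m t)) (Measure.pi m) := by
  have hm : Measurable (fun q : (∀ t, S t) × S t => Function.update q.1 t q.2) := by
    refine measurable_pi_lambda _ fun i => ?_
    by_cases h : i = t
    · subst h
      simpa using measurable_snd
    · simpa [Function.update_of_ne h, Function.comp_def] using
        (measurable_pi_apply i).comp measurable_fst
  refine ⟨hm, (Measure.pi_eq fun B hB => ?_).symm⟩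
  rw [Measure.map_apply hm (MeasurableSet.univ_pi hB)]
  have hpre : (fun q : (∀ t, S t) × S t => Function.update q.1 t q.2) ⁻¹' (univ.pi B)
      = (univ.pi (Function.update B t univ)) ×ˢ B t := by
    ext ⟨s, r⟩
    simp only [mem_preimage, mem_univ_pi, mem_prod]
    constructor
    · intro h
      refine ⟨fun i => ?_, by simpa using h t⟩
      by_cases hi : i = t
      · subst hi
        simp
      · simpa [Function.update_of_ne hi] using h i
    · rintro ⟨h, hr⟩ i
      by_cases hi : i = t
      · subst hi
        simpa using hr
      · simpa [Function.update_of_ne hi] using h i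
  rw [hpre, Measure.prod_prod, Measure.pi_pi, ← Finset.mul_prod_erase _ _ (Finset.mem_univ t),
    ← Finset.mul_prod_erase Finset.univ (fun i => m i (B i)) (Finset.mem_univ t)]
  have he : ∏ i ∈ Finset.univ.erase t, m i (Function.update B t univ i)
      = ∏ i ∈ Finset.univ.erase t, m i (B i) :=
    Finset.prod_congr rfl fun i hi => by
      rw [Function.update_of_ne (Finset.ne_of_mem_erase hi)]
  rw [he]
  simp [mul_comm]

/-- **Lemma (componentwise convergence of converging sums).**
Let `μ_t` be Borel probability measures on Polish spaces `S_t`, `t = 0, …, T`.  If a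
sequence of functions `s ↦ ∑_t (x^ν)^t (s_t)` (with each `(x^ν)^t` Borel measurable on
`S_t`, `ℝ^d`-valued) converges `∏_t μ_t`-almost everywhere, then there are sequences
`((x̃^ν)^t)_ν` of Borel functions on the `S_t`, each converging `μ_t`-almost everywhere,
such that `∑_t (x̃^ν)^t (s_t) = ∑_t (x^ν)^t (s_t)` for all `ν` and `s`. -/
theorem stmt14
    {T d : ℕ} (S : Fin (T + 1) → Type*)
    [∀ t, TopologicalSpace (S t)] [∀ t, PolishSpace (S t)]
    [∀ t, MeasurableSpace (S t)] [∀ t, BorelSpace (S t)]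
    (μt : ∀ t, Measure (S t)) [∀ t, IsProbabilityMeasure (μt t)]
    (x : ℕ → ∀ t, S t → (Fin d → ℝ))
    (hx : ∀ ν t, Measurable (x ν t))
    (hconv : ∀ᵐ s ∂(Measure.pi μt),
      ∃ L : Fin d → ℝ, Tendsto (fun ν => ∑ t, x ν t (s t)) atTop (nhds L)) :
    ∃ y : ℕ → ∀ t, S t → (Fin d → ℝ),
      (∀ ν t, Measurable (y ν t)) ∧
      (∀ t, ∀ᵐ st ∂(μt t),
        ∃ L : Fin d → ℝ, Tendsto (fun ν => y ν t st) atTop (nhds L)) ∧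
      (∀ ν (s : ∀ t, S t), ∑ t, y ν t (s t) = ∑ t, x ν t (s t)) := by
  have hres : ∀ᵐ p ∂(Measure.pi μt), ∀ t, ∀ᵐ r ∂(μt t),
      ∃ L : Fin d → ℝ,
        Tendsto (fun ν => ∑ i, x ν i (Function.update p t r i)) atTop (nhds L) :=
    ae_all_iff.2 fun t =>
      Measure.ae_ae_of_ae_prod
        ((measurePreserving_resample μt t).quasiMeasurePreserving.ae hconv)
  obtain ⟨p, ⟨L, hL⟩, hp⟩ := (hconv.and hres).exists
  refine ⟨fun ν t r => x ν t r - x ν t (p t) + if t = 0 then ∑ i, x ν i (p i) else 0,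
    fun ν t => ((hx ν t).sub_const _).add_const _, fun t => ?_, fun ν s => ?_⟩
  · filter_upwards [hp t] with r hr
    obtain ⟨M, hM⟩ := hr
    have hdiff : ∀ ν, ∑ i, x ν i (Function.update p t r i) - ∑ i, x ν i (p i)
        = x ν t r - x ν t (p t) := by
      intro ν
      rw [← Finset.sum_sub_distrib, Finset.sum_eq_single t]
      · simp
      · intro i _ hi
        rw [Function.update_of_ne hi, sub_self]
      · simp
    refine ⟨M - L + if t = 0 then L else 0, ?_⟩
    refine Tendsto.add (by simpa only [hdiff] using hM.sub hL) ?_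
    split_ifs
    · exact hL
    · exact tendsto_const_nhds
  · simp [Finset.sum_add_distrib, Finset.sum_sub_distrib]
end
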